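/- arXiv:1509.05688 — 12 statements merged into one kernel-verified Lean document; each statement's English description precedes it below -/
import Mathlib

section
/- If G and H are balanced groups, then the free product G * H is a balanced group. -/
/-- A group `G` is balanced if for every element `x` of infinite order and all integers
`m, n`, if `x ^ m` is conjugate in `G` to `x ^ n` then `|m| = |n|`. -/
def IsBalanced (G : Type*) [Group G] : Prop :=
  ∀ x : G, ¬ IsOfFinOrder x → ∀ m n : ℤ, (∃ g : G, g * x ^ m * g⁻¹ = x ^ n) → |m| = |n|

/-!
An element with positive stable length `lim ℓ (x ^ k) / k` for some group seminorm `ℓ` cannot have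
`x ^ m` conjugate to `x ^ n` unless `|m| = |n|`, since the stable length is conjugation invariant
and homogeneous. In a free product take for `ℓ` the syllable length: a shortest conjugate of `x`
is either a single syllable, and then retracting onto its factor reduces to that factor, or it is
cyclically reduced, and then no cancellation occurs in its powers, so its stable length is positive.
-/

open Filter Topology Monoid CoprodI

/-- The condition defining a balanced group, at a single element `x`, which may have finite order:
a group is balanced when all its elements of infinite order satisfy it. -/
def IsBalancedElem {A : Type*} [Group A] (x : A) : Prop :=
  ∀ m n : ℤ, IsConj (x ^ m) (x ^ n) → |m| = |n|

theorem isBalanced_iff_forall_isBalancedElem {A : Type*} [Group A] :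
    IsBalanced A ↔ ∀ x : A, ¬ IsOfFinOrder x → IsBalancedElem x := by
  simp only [IsBalanced, IsBalancedElem, isConj_iff]

theorem IsBalancedElem.of_map {A B : Type*} [Group A] [Group B] {x : A} (f : A →* B)
    (hx : IsBalancedElem (f x)) : IsBalancedElem x := fun m n h ↦
  hx m n <| by simpa only [map_zpow] using f.map_isConj h

theorem IsBalancedElem.of_isConj {A : Type*} [Group A] {x y : A} (hy : IsBalancedElem y)
    (h : IsConj x y) : IsBalancedElem x := by
  obtain ⟨c, rfl⟩ := isConj_iff.1 h
  exact .of_map (MulAut.conj c).toMonoidHom hy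

theorem IsBalancedElem.coprodI_of {ι : Type*} {G : ι → Type*} [∀ i, Group (G i)] {i : ι} {a : G i}
    (ha : IsBalancedElem a) : IsBalancedElem (of a : CoprodI G) := by
  classical
  let retraction : CoprodI G →* G i := CoprodI.lift (Pi.mulSingle i (MonoidHom.id (G i)))
  have hretraction : retraction (of a) = a := of_leftInverse i a
  exact .of_map retraction (hretraction.symm ▸ ha)

theorem IsBalanced.of_injective {A B : Type*} [Group A] [Group B] (hB : IsBalanced B) (f : A →* B)
    (hf : Function.Injective f) : IsBalanced A :=
  isBalanced_iff_forall_isBalancedElem.2 fun x hx ↦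
    .of_map f <| isBalanced_iff_forall_isBalancedElem.1 hB (f x) <| by rwa [hf.isOfFinOrder_iff]

section StableLength

variable {A : Type*} [Group A] (ℓ : GroupSeminorm A)

theorem subadditive_seminorm_pow (x : A) : Subadditive fun k : ℕ ↦ ℓ (x ^ k) := fun j k ↦ by
  simpa only [pow_add] using map_mul_le_add ℓ (x ^ j) (x ^ k)

/-- The stable length (or translation length) `lim ℓ (x ^ k) / k` of `x`, which exists by Fekete's
lemma. -/
noncomputable def stableLength (x : A) : ℝ :=
  (subadditive_seminorm_pow ℓ x).lim

theorem tendsto_stableLength (x : A) :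
    Tendsto (fun k : ℕ ↦ ℓ (x ^ k) / k) atTop (𝓝 (stableLength ℓ x)) :=
  (subadditive_seminorm_pow ℓ x).tendsto_lim
    ⟨0, Set.forall_mem_range.2 fun k ↦ div_nonneg (apply_nonneg ℓ _) k.cast_nonneg⟩

variable {ℓ}

theorem stableLength_eq_of_forall_pow {x : A} {c : ℝ} (h : ∀ k : ℕ, ℓ (x ^ k) = k * c) :
    stableLength ℓ x = c := by
  refine tendsto_nhds_unique (tendsto_stableLength ℓ x) (tendsto_const_nhds.congr' ?_)
  filter_upwards [eventually_ne_atTop 0] with k hk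
  rw [h, mul_div_cancel_left₀ c (Nat.cast_ne_zero.2 hk)]

theorem stableLength_le_of_isConj {x y : A} (h : IsConj x y) :
    stableLength ℓ y ≤ stableLength ℓ x := by
  obtain ⟨g, rfl⟩ := isConj_iff.1 h
  have hlim : Tendsto (fun k : ℕ ↦ ℓ (x ^ k) / k + (ℓ g + ℓ g) / k) atTop
      (𝓝 (stableLength ℓ x + 0)) :=
    (tendsto_stableLength ℓ x).add (tendsto_const_div_atTop_nhds_zero_nat _)
  rw [add_zero] at hlim
  refine le_of_tendsto_of_tendsto' (tendsto_stableLength ℓ _) hlim fun k ↦ ?_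
  rw [← add_div, conj_pow]
  gcongr
  calc ℓ (g * x ^ k * g⁻¹) ≤ ℓ g + ℓ (x ^ k) + ℓ g⁻¹ :=
        (map_mul_le_add ℓ _ _).trans (by gcongr; exact map_mul_le_add ℓ _ _)
    _ = ℓ (x ^ k) + (ℓ g + ℓ g) := by rw [map_inv_eq_map]; ring

theorem stableLength_eq_of_isConj {x y : A} (h : IsConj x y) :
    stableLength ℓ x = stableLength ℓ y :=
  (stableLength_le_of_isConj h.symm).antisymm (stableLength_le_of_isConj h)

variable (ℓ)

theorem stableLength_inv (x : A) : stableLength ℓ x⁻¹ = stableLength ℓ x := by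
  refine tendsto_nhds_unique (tendsto_stableLength ℓ x⁻¹) ?_
  simpa only [inv_pow, map_inv_eq_map] using tendsto_stableLength ℓ x

theorem stableLength_pow (x : A) (n : ℕ) : stableLength ℓ (x ^ n) = n * stableLength ℓ x := by
  obtain rfl | hn := eq_or_ne n 0
  · simpa using stableLength_eq_of_forall_pow (ℓ := ℓ) (x := 1) (c := 0) (by simp)
  refine tendsto_nhds_unique (tendsto_stableLength ℓ (x ^ n)) ?_
  have hsub : Tendsto (fun k : ℕ ↦ n * k) atTop atTop :=
    tendsto_id.const_mul_atTop' (Nat.pos_of_ne_zero hn)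
  refine (((tendsto_stableLength ℓ x).comp hsub).const_mul (n : ℝ)).congr fun k ↦ ?_
  have hn' : (n : ℝ) ≠ 0 := Nat.cast_ne_zero.2 hn
  rw [Function.comp_apply, Nat.cast_mul, mul_div_assoc', mul_div_mul_left _ _ hn', pow_mul]

theorem stableLength_zpow (x : A) (n : ℤ) : stableLength ℓ (x ^ n) = |n| * stableLength ℓ x := by
  obtain ⟨k, rfl | rfl⟩ := n.eq_nat_or_neg
  · simp [stableLength_pow]
  · simp [stableLength_pow, stableLength_inv]

variable {ℓ}

theorem isBalancedElem_of_stableLength_ne_zero {x : A} (hx : stableLength ℓ x ≠ 0) :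
    IsBalancedElem x := fun m n h ↦ by
  have hmn := stableLength_eq_of_isConj (ℓ := ℓ) h
  rw [stableLength_zpow, stableLength_zpow] at hmn
  exact_mod_cast mul_right_cancel₀ hx hmn

end StableLength

section SyllableLength

variable {ι : Type*}

section Monoid

variable {M : ι → Type*} [∀ i, Monoid (M i)]

open scoped Classical in
/-- The number of syllables in the reduced word representing an element of a free product. -/
noncomputable def syllableLength (x : CoprodI M) : ℕ :=
  (Word.equiv x).toList.length

theorem syllableLength_prod (w : Word M) : syllableLength w.prod = w.toList.length := by
  classical
  exact congrArg (fun v : Word M ↦ v.toList.length) (Word.equiv.apply_symm_apply w)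

theorem exists_word_prod_eq (x : CoprodI M) : ∃ w : Word M, w.prod = x := by
  classical
  exact Word.equiv.symm.surjective x

theorem syllableLength_one : syllableLength (1 : CoprodI M) = 0 := by
  rw [← Word.prod_empty, syllableLength_prod, Word.empty, List.length_nil]

open scoped Classical in
theorem length_tail_le_length_rcons {i : ι} (p : Word.Pair M i) :
    p.tail.toList.length ≤ (Word.rcons p).toList.length := by
  unfold Word.rcons
  split_ifs <;> simp [Word.cons]

open scoped Classical in
theorem length_rcons_le {i : ι} (p : Word.Pair M i) :
    (Word.rcons p).toList.length ≤ p.tail.toList.length + 1 := by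
  unfold Word.rcons
  split_ifs <;> simp [Word.cons]

theorem syllableLength_of_mul_le {i : ι} (m : M i) (x : CoprodI M) :
    syllableLength (of m * x) ≤ syllableLength x + 1 := by
  classical
  obtain ⟨w, rfl⟩ := exists_word_prod_eq x
  obtain ⟨p, rfl⟩ := (Word.equivPair i).symm.surjective w
  rw [← Word.prod_smul, syllableLength_prod, syllableLength_prod, Word.of_smul_def,
    Equiv.apply_symm_apply, Word.equivPair_symm]
  exact (length_rcons_le _).trans (by gcongr; exact length_tail_le_length_rcons p)

theorem syllableLength_list_prod_mul_le (l : List (Σ i, M i)) (x : CoprodI M) :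
    syllableLength ((l.map fun s ↦ of s.2).prod * x) ≤ l.length + syllableLength x := by
  induction l with
  | nil => simp
  | cons s l ih =>
    rw [List.map_cons, List.prod_cons, mul_assoc, List.length_cons, Nat.add_right_comm]
    exact (syllableLength_of_mul_le _ _).trans (by gcongr)

theorem syllableLength_list_prod_le (l : List (Σ i, M i)) :
    syllableLength (l.map fun s ↦ of s.2).prod ≤ l.length := by
  simpa [syllableLength_one] using syllableLength_list_prod_mul_le l 1

theorem syllableLength_mul_le (x y : CoprodI M) :
    syllableLength (x * y) ≤ syllableLength x + syllableLength y := by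
  obtain ⟨w, rfl⟩ := exists_word_prod_eq x
  rw [syllableLength_prod]
  exact syllableLength_list_prod_mul_le w.toList y

theorem syllableLength_neWord_prod {i j : ι} (w : NeWord M i j) :
    syllableLength w.prod = w.toList.length :=
  syllableLength_prod w.toWord

theorem exists_neWord_prod_eq_pow_succ {i j : ι} (hji : j ≠ i) (w : NeWord M i j) (k : ℕ) :
    ∃ v : NeWord M i j, v.prod = w.prod ^ (k + 1) ∧
      v.toList.length = (k + 1) * w.toList.length := by
  induction k with
  | zero => exact ⟨w, by simp, by simp⟩
  | succ k ih =>
    obtain ⟨v, hprod, hlength⟩ := ih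
    refine ⟨v.append hji w, ?_, ?_⟩
    · rw [NeWord.append_prod, hprod, ← pow_succ]
    · rw [NeWord.toList, List.length_append, hlength, ← Nat.succ_mul]

theorem syllableLength_neWord_prod_pow {i j : ι} (hji : j ≠ i) (w : NeWord M i j) (k : ℕ) :
    syllableLength (w.prod ^ k) = k * w.toList.length := by
  cases k with
  | zero => rw [pow_zero, syllableLength_one, zero_mul]
  | succ k =>
    obtain ⟨v, hprod, hlength⟩ := exists_neWord_prod_eq_pow_succ hji w k
    rw [← hprod, syllableLength_neWord_prod, hlength]

end Monoid

variable {G : ι → Type*} [∀ i, Group (G i)]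

theorem syllableLength_inv_le (x : CoprodI G) : syllableLength x⁻¹ ≤ syllableLength x := by
  obtain ⟨w, rfl⟩ := exists_word_prod_eq x
  let l : List (Σ i, G i) := (w.toList.map fun s ↦ ⟨s.1, s.2⁻¹⟩).reverse
  have hl : w.prod⁻¹ = (l.map fun s ↦ of s.2).prod := by
    simp [l, Word.prod, List.prod_inv_reverse, Function.comp_def]
  calc syllableLength w.prod⁻¹ ≤ l.length := hl ▸ syllableLength_list_prod_le l
    _ = syllableLength w.prod := by simp [l, syllableLength_prod]

variable (G) in
/-- The syllable length as a group seminorm on the free product. -/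
noncomputable def syllableSeminorm : GroupSeminorm (CoprodI G) where
  toFun x := syllableLength x
  map_one' := by rw [syllableLength_one, Nat.cast_zero]
  mul_le' x y := mod_cast syllableLength_mul_le x y
  inv' x := congrArg Nat.cast <| (syllableLength_inv_le x).antisymm <| by
    simpa only [inv_inv] using syllableLength_inv_le x⁻¹

theorem stableLength_neWord_prod {i j : ι} (hji : j ≠ i) (w : NeWord G i j) :
    stableLength (syllableSeminorm G) w.prod = w.toList.length :=
  stableLength_eq_of_forall_pow fun k ↦
    (congrArg Nat.cast (syllableLength_neWord_prod_pow hji w k)).trans (Nat.cast_mul k _)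

theorem neWord_prod_eq_of_or_exists_isConj_syllableLength_lt {i : ι} (w : NeWord G i i) :
    (∃ a : G i, w.prod = of a) ∨
      ∃ y, IsConj w.prod y ∧ syllableLength y < syllableLength w.prod := by
  obtain ⟨l, hl⟩ := List.getLast?_eq_some_iff.1 w.toList_getLast?
  have hprod : w.prod = (w.toList.map fun s ↦ of s.2).prod := rfl
  cases l with
  | nil => exact .inl ⟨w.last, by simp [hprod, hl]⟩
  | cons s l =>
    obtain rfl : s = ⟨i, w.head⟩ := by simpa [hl] using w.toList_head?
    let l' : List (Σ i, G i) := ⟨i, w.last * w.head⟩ :: l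
    -- Conjugating by the last syllable merges it with the first one.
    have hconj : of w.last * w.prod * (of w.last)⁻¹ = (l'.map fun s ↦ of s.2).prod := by
      simp [hprod, hl, l', mul_assoc]
    refine .inr ⟨_, isConj_iff.2 ⟨_, hconj⟩, (syllableLength_list_prod_le l').trans_lt ?_⟩
    simp [syllableLength_neWord_prod, hl, l']

theorem isConj_of_or_stableLength_ne_zero {x : CoprodI G} (hx : x ≠ 1) :
    (∃ (i : ι) (a : G i), IsConj x (of a)) ∨ stableLength (syllableSeminorm G) x ≠ 0 := by
  obtain ⟨y, hxy, hmin⟩ :=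
    (measure syllableLength).wf.has_min {y | IsConj x y} ⟨x, IsConj.refl x⟩
  obtain ⟨v, rfl⟩ := exists_word_prod_eq y
  have hv : v ≠ Word.empty := by
    rintro rfl
    exact hx (isConj_one_left.1 hxy)
  obtain ⟨i, j, w, rfl⟩ := NeWord.of_word v hv
  obtain rfl | hji := eq_or_ne j i
  · obtain ⟨a, ha⟩ | ⟨z, hz, hlt⟩ := neWord_prod_eq_of_or_exists_isConj_syllableLength_lt w
    · exact .inl ⟨j, a, ha ▸ hxy⟩
    · exact absurd hlt (hmin z (hxy.trans hz))
  · right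
    rw [stableLength_eq_of_isConj hxy]
    exact (stableLength_neWord_prod hji w).trans_ne <|
      Nat.cast_ne_zero.2 (List.length_pos_of_ne_nil w.toList_ne_nil).ne'

end SyllableLength

theorem balanced_free_prod_general {ι : Type*} {G : ι → Type*} [∀ i, Group (G i)]
    (hG : ∀ i, IsBalanced (G i)) : IsBalanced (CoprodI G) := by
  refine isBalanced_iff_forall_isBalancedElem.2 fun x hx ↦ ?_
  have hx_one : x ≠ 1 := by
    rintro rfl
    exact hx IsOfFinOrder.one
  obtain ⟨i, a, hxa⟩ | hstable := isConj_of_or_stableLength_ne_zero hx_one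
  · have ha : ¬ IsOfFinOrder a := fun ha ↦ hx (hxa.symm.isOfFinOrder (of.isOfFinOrder ha))
    exact (isBalanced_iff_forall_isBalancedElem.1 (hG i) a ha).coprodI_of.of_isConj hxa
  · exact isBalancedElem_of_stableLength_ne_zero hstable

section BinaryCoproduct

universe u v

/-- The pair `G, H` as a family of types indexed by `Bool`, lifted to a common universe so that
the binary free product can be compared with an indexed one. -/
def CoprodFactor (G : Type u) (H : Type v) : Bool → Type (max u v)
  | true => ULift.{v} G
  | false => ULift.{u} H

variable (G : Type u) (H : Type v) [Group G] [Group H]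

instance : ∀ b, Group (CoprodFactor G H b)
  | true => inferInstanceAs (Group (ULift.{v} G))
  | false => inferInstanceAs (Group (ULift.{u} H))

/-- The binary free product as a free product over `Bool`. -/
def coprodEquivCoprodI : Coprod G H ≃* CoprodI (CoprodFactor G H) :=
  MonoidHom.toMulEquiv
    (Coprod.lift
      ((of (i := true)).comp (MulEquiv.ulift (α := G)).symm.toMonoidHom)
      ((of (i := false)).comp (MulEquiv.ulift (α := H)).symm.toMonoidHom))
    (CoprodI.lift fun
      | true => Coprod.inl.comp (MulEquiv.ulift (α := G)).toMonoidHom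
      | false => Coprod.inr.comp (MulEquiv.ulift (α := H)).toMonoidHom)
    (Coprod.hom_ext rfl rfl)
    (CoprodI.ext_hom _ _ <| Bool.forall_bool.2 ⟨rfl, rfl⟩)

variable {G H}

theorem isBalanced_coprodFactor (hG : IsBalanced G) (hH : IsBalanced H) :
    ∀ b, IsBalanced (CoprodFactor G H b)
  | true => hG.of_injective (MulEquiv.ulift (α := G)).toMonoidHom MulEquiv.ulift.injective
  | false => hH.of_injective (MulEquiv.ulift (α := H)).toMonoidHom MulEquiv.ulift.injective

end BinaryCoproduct

/-- If `G` and `H` are balanced groups, then the free product (coproduct) `G ∗ H`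
is balanced. -/
theorem balanced_free_prod {G H : Type*} [Group G] [Group H]
    (hG : IsBalanced G) (hH : IsBalanced H) : IsBalanced (Monoid.Coprod G H) :=
  (balanced_free_prod_general (isBalanced_coprodFactor hG hH)).of_injective
    (coprodEquivCoprodI G H).toMonoidHom (coprodEquivCoprodI G H).injective
end

section
/- Let G be a group, x ∈ G an element of infinite order, and suppose g x^m g⁻¹ = x^n holds in G for some g ∈ G and integers m, n with |m| ≠ |n|. Then at least one of the infinite cyclic subgroups ⟨x^m⟩ or ⟨x^n⟩ is not separable in G. In particular, a group in which every cyclic subgroup is separable is balanced. -/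
/-- A subgroup `S` of `G` is separable if every element outside `S` can be excluded
by a finite-index subgroup containing `S`. -/
def IsSeparable' {G : Type*} [Group G] (S : Subgroup G) : Prop :=
  ∀ g : G, g ∉ S → ∃ K : Subgroup G, K.FiniteIndex ∧ S ≤ K ∧ g ∉ K

/-!
Conjugate elements have the same order, and a finite cyclic group has at most one subgroup of each
order. Hence, in a finite quotient of `G`, conjugate powers of one element generate the same
subgroup, so every finite-index subgroup of `G` that contains `x ^ n` also contains its conjugate
`x ^ m`. If `⟨x ^ n⟩` is separable, this forces `x ^ m ∈ ⟨x ^ n⟩`, that is `n ∣ m`; by symmetry,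
separability of `⟨x ^ m⟩` forces `m ∣ n`.
-/

section

open Subgroup

theorem mem_zpowers_of_orderOf_dvd {C : Type*} [Group C] [IsCyclic C] [Finite C] {a b : C}
    (hab : orderOf a ∣ orderOf b) : a ∈ zpowers b := by
  classical
  have := Fintype.ofFinite C
  have hsub : (zpowers b : Set C) ⊆ {c : C | c ^ orderOf b = 1} := fun c hc ↦
    orderOf_dvd_iff_pow_eq_one.mp (orderOf_dvd_of_mem_zpowers hc)
  have hcard : {c : C | c ^ orderOf b = 1}.ncard ≤ (zpowers b : Set C).ncard := by
    calc
      _ = Finset.card {c : C | c ^ orderOf b = 1} := by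
        rw [Set.ncard_eq_toFinset_card', Set.toFinset_ofPred]
      _ ≤ orderOf b := IsCyclic.card_pow_eq_one_le (orderOf_pos b)
      _ = (zpowers b : Set C).ncard := (Nat.card_zpowers b).symm
  exact (Set.eq_of_subset_of_ncard_le hsub hcard).superset (orderOf_dvd_iff_pow_eq_one.mp hab)

variable {G : Type*} [Group G] {x a b : G}

theorem mem_zpowers_of_mem_zpowers_of_orderOf_dvd (hx : IsOfFinOrder x) (ha : a ∈ zpowers x)
    (hb : b ∈ zpowers x) (hab : orderOf a ∣ orderOf b) : a ∈ zpowers b := by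
  have : Finite (zpowers x) := hx.finite_zpowers
  have hmem : (⟨a, ha⟩ : zpowers x) ∈ zpowers (⟨b, hb⟩ : zpowers x) :=
    mem_zpowers_of_orderOf_dvd (by simpa only [orderOf_mk] using hab)
  obtain ⟨k, hk⟩ := mem_zpowers_iff.mp hmem
  exact mem_zpowers_iff.mpr ⟨k, congrArg Subtype.val hk⟩

theorem orderOf_eq_of_isConj (hab : IsConj a b) : orderOf a = orderOf b :=
  let ⟨c, hc⟩ := hab
  SemiconjBy.orderOf_eq (c : G) hc

theorem mem_of_isConj_of_finiteIndex {K : Subgroup G} [K.FiniteIndex] (ha : a ∈ zpowers x)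
    (hb : b ∈ zpowers x) (hab : IsConj a b) (hbK : b ∈ K) : a ∈ K := by
  let π : G →* G ⧸ K.normalCore := QuotientGroup.mk' K.normalCore
  have hπ {c : G} (hc : c ∈ zpowers x) : π c ∈ zpowers (π x) :=
    π.map_zpowers x ▸ mem_map_of_mem π hc
  have hπa : π a ∈ zpowers (π b) :=
    mem_zpowers_of_mem_zpowers_of_orderOf_dvd (isOfFinOrder_of_finite (π x)) (hπ ha) (hπ hb)
      (orderOf_eq_of_isConj (π.map_isConj hab)).dvd
  have hker : π.ker ≤ K := (QuotientGroup.ker_mk' K.normalCore).trans_le K.normalCore_le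
  rw [← comap_map_eq_self hker]
  exact zpowers_le.mpr (mem_map_of_mem π hbK) hπa

theorem IsSeparable'.mem_of_isConj {S : Subgroup G} (hS : IsSeparable' S) (ha : a ∈ zpowers x)
    (hb : b ∈ zpowers x) (hab : IsConj a b) (hbS : b ∈ S) : a ∈ S := by
  by_contra haS
  obtain ⟨K, _, hSK, haK⟩ := hS a haS
  exact haK (mem_of_isConj_of_finiteIndex ha hb hab (hSK hbS))

theorem zpow_mem_zpowers_zpow_iff_dvd (hx : ¬ IsOfFinOrder x) {m n : ℤ} :
    x ^ m ∈ zpowers (x ^ n) ↔ n ∣ m := by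
  simp_rw [mem_zpowers_iff, ← zpow_mul, (injective_zpow_iff_not_isOfFinOrder.mpr hx).eq_iff,
    dvd_def, eq_comm]

theorem IsSeparable'.dvd_of_isConj_zpow {m n : ℤ} (hS : IsSeparable' (zpowers (x ^ n)))
    (hx : ¬ IsOfFinOrder x) (hmn : IsConj (x ^ m) (x ^ n)) : n ∣ m :=
  (zpow_mem_zpowers_zpow_iff_dvd hx).mp <|
    hS.mem_of_isConj (zpow_mem_zpowers x m) (zpow_mem_zpowers x n) hmn (mem_zpowers (x ^ n))

theorem abs_eq_abs_of_isSeparable'_zpowers {m n : ℤ} (hx : ¬ IsOfFinOrder x)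
    (hmn : IsConj (x ^ m) (x ^ n)) (hm : IsSeparable' (zpowers (x ^ m)))
    (hn : IsSeparable' (zpowers (x ^ n))) : |m| = |n| := by
  rw [Int.abs_eq_natAbs, Int.abs_eq_natAbs, Int.natAbs_eq_of_dvd_dvd
    (hm.dvd_of_isConj_zpow hx hmn.symm) (hn.dvd_of_isConj_zpow hx hmn)]

end

/-- If `g * x^m * g⁻¹ = x^n` with `x` of infinite order and `|m| ≠ |n|`, then one of the
cyclic subgroups `⟨x^m⟩`, `⟨x^n⟩` is not separable in `G`.  In particular a group all of
whose cyclic subgroups are separable is balanced. -/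
theorem not_separable_of_unbalanced {G : Type*} [Group G] :
    (∀ (x g : G) (m n : ℤ), ¬ IsOfFinOrder x → g * x ^ m * g⁻¹ = x ^ n → |m| ≠ |n| →
      ¬ IsSeparable' (Subgroup.zpowers (x ^ m)) ∨ ¬ IsSeparable' (Subgroup.zpowers (x ^ n))) ∧
    ((∀ x : G, IsSeparable' (Subgroup.zpowers x)) → IsBalanced G) := by
  refine ⟨fun x g m n hx hg hne ↦ ?_, fun hsep x hx m n ⟨g, hg⟩ ↦ ?_⟩
  · by_contra! hsep
    exact hne (abs_eq_abs_of_isSeparable'_zpowers hx (isConj_iff.mpr ⟨g, hg⟩) hsep.1 hsep.2)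
  · exact abs_eq_abs_of_isSeparable'_zpowers hx (isConj_iff.mpr ⟨g, hg⟩) (hsep _) (hsep _)
end

section
/- Let G be a group containing a finite index subgroup isomorphic to a semidirect product F ⋊ ℤ, where F is a free group (of arbitrary, possibly infinite, rank). Then G is balanced. In particular every free-by-cyclic group F ⋊ ℤ with F free is balanced. -/
/-!
Iterating `g x ^ m g⁻¹ = x ^ n` gives `g ^ k x ^ (m ^ k) g ^ (-k) = x ^ (n ^ k)`, so balancedness
may be tested in a subgroup containing powers of `x` and `g`. In an extension of a balanced
group `Q` by a free group `N`, either `x` has infinite order in `Q`, or some power of `x` is a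
nontrivial `y : N` and conjugation by `g` is an automorphism `ψ` of `N` with
`ψ y ^ m = y ^ n`. Uniqueness of roots then forces `ψ` to preserve the centralizer of `y`, which is
infinite cyclic, so `ψ y = y` or `ψ y = y⁻¹`.
-/

section FreeGroup

theorem center_freeGroup_eq_bot (α : Type*) [Nontrivial α] :
    Subgroup.center (FreeGroup α) = ⊥ := by
  classical
  refine (Subgroup.eq_bot_iff_forall _).mpr fun z hz ↦ ?_
  by_contra hz_ne
  obtain ⟨⟨b, s⟩, t, hw⟩ := List.exists_cons_of_ne_nil (mt FreeGroup.toWord_eq_nil_iff.mp hz_ne)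
  obtain ⟨a, hab⟩ := exists_ne b
  have word_left : (FreeGroup.of a * z).toWord = (a, true) :: z.toWord := by
    have hred : FreeGroup.IsReduced ((a, true) :: z.toWord) := by
      have hz_red := FreeGroup.isReduced_toWord (x := z)
      rw [hw] at hz_red ⊢
      exact List.isChain_cons_cons.mpr ⟨fun h ↦ absurd h hab, hz_red⟩
    rw [FreeGroup.toWord_mul, FreeGroup.toWord_of]
    exact hred.reduce_eq
  have word_right : (a, true) :: z.toWord = z.toWord ++ [(a, true)] := by
    have hsub := FreeGroup.toWord_mul_sublist z (FreeGroup.of a)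
    rw [← Subgroup.mem_center_iff.mp hz, word_left, FreeGroup.toWord_of] at hsub
    exact hsub.eq_of_length (by simp)
  rw [hw, List.cons_append] at word_right
  exact hab (congrArg Prod.fst (List.cons.inj word_right).1)

theorem isCyclic_freeGroup (α : Type*) [Subsingleton α] : IsCyclic (FreeGroup α) := by
  rcases isEmpty_or_nonempty α with _ | ⟨⟨a⟩⟩
  · exact isCyclic_of_subsingleton
  · have := uniqueOfSubsingleton a
    infer_instance

theorem isCyclic_of_center_ne_bot {F : Type*} [Group F] [IsFreeGroup F]
    (h : Subgroup.center F ≠ ⊥) : IsCyclic F := by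
  let e := IsFreeGroup.toFreeGroup F
  rcases subsingleton_or_nontrivial (IsFreeGroup.Generators F) with _ | _
  · exact e.isCyclic.mpr (isCyclic_freeGroup _)
  · refine absurd ((Subgroup.eq_bot_iff_forall _).mpr fun z hz ↦ ?_) h
    have hez : e z ∈ Subgroup.center (FreeGroup (IsFreeGroup.Generators F)) := by
      rw [Subgroup.mem_center_iff, e.surjective.forall]
      intro y
      rw [← map_mul, ← map_mul, Subgroup.mem_center_iff.mp hz]
    rw [center_freeGroup_eq_bot, Subgroup.mem_bot] at hez
    exact (map_eq_one_iff e e.injective).mp hez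

end FreeGroup

section Centralizer

/-- The centralizer of every nontrivial element is cyclic. Together with torsion-freeness, this is
the property of a free group that makes its extensions by balanced groups balanced. -/
def HasCyclicCentralizers (N : Type*) [Group N] : Prop :=
  ∀ x : N, x ≠ 1 → IsCyclic (Subgroup.centralizer {x})

theorem hasCyclicCentralizers_of_isFreeGroup (F : Type*) [Group F] [IsFreeGroup F] :
    HasCyclicCentralizers F := by
  intro x hx
  have hxC : x ∈ Subgroup.centralizer {x} := Subgroup.mem_centralizer_singleton_iff.mpr rfl
  refine isCyclic_of_center_ne_bot fun hbot ↦ hx ?_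
  have hcenter : (⟨x, hxC⟩ : Subgroup.centralizer {x}) ∈ Subgroup.center _ :=
    Subgroup.mem_center_iff.mpr fun y ↦
      Subtype.ext (Subgroup.mem_centralizer_singleton_iff.mp y.2)
  rw [hbot, Subgroup.mem_bot] at hcenter
  exact congrArg Subtype.val hcenter

theorem map_centralizer_singleton {N N' : Type*} [Group N] [Group N'] (ψ : N ≃* N') (x : N) :
    (Subgroup.centralizer {x}).map ψ.toMonoidHom = Subgroup.centralizer {ψ x} := by
  ext y
  obtain ⟨y, rfl⟩ := ψ.surjective y
  simp only [Subgroup.mem_map_equiv, ψ.symm_apply_apply, Subgroup.mem_centralizer_singleton_iff,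
    ← map_mul, ψ.injective.eq_iff]

variable {N : Type*} [Group N] [IsMulTorsionFree N]

theorem centralizer_zpow_singleton (x : N) {n : ℤ} (hn : n ≠ 0) :
    Subgroup.centralizer {x ^ n} = Subgroup.centralizer {x} := by
  ext y
  rw [Subgroup.mem_centralizer_singleton_iff, Subgroup.mem_centralizer_singleton_iff,
    ← mul_inv_eq_iff_eq_mul, ← mul_inv_eq_iff_eq_mul, ← conj_zpow, zpow_left_inj hn]

theorem apply_eq_or_eq_inv_of_map_centralizer_eq {x : N} (hx : x ≠ 1)
    (hC : IsCyclic (Subgroup.centralizer {x})) (ψ : N ≃* N)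
    (hψ : (Subgroup.centralizer {x}).map ψ.toMonoidHom = Subgroup.centralizer {x}) :
    ψ x = x ∨ ψ x = x⁻¹ := by
  obtain ⟨c, hc⟩ := (Subgroup.isCyclic_iff_exists_zpowers_eq_top _).mp hC
  obtain ⟨k, rfl⟩ : x ∈ Subgroup.zpowers c :=
    hc ▸ Subgroup.mem_centralizer_singleton_iff.mpr rfl
  have hc_inf : ¬ IsOfFinOrder c :=
    not_isOfFinOrder_of_isMulTorsionFree fun h ↦ hx (by simp [h])
  rw [← hc, MonoidHom.map_zpowers] at hψ
  rcases (Subgroup.zpowers_eq_zpowers_iff hc_inf).mp hψ.symm with h | h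
  · left
    rw [map_zpow]
    exact congrArg (· ^ k) h.symm
  · right
    rw [map_zpow, ← inv_zpow]
    exact congrArg (· ^ k) h.symm

theorem abs_eq_of_apply_zpow_eq_zpow (hN : HasCyclicCentralizers N) (ψ : N ≃* N)
    {x : N} (hx : x ≠ 1) {m n : ℤ} (h : ψ x ^ m = x ^ n) : |m| = |n| := by
  have hψx : ψ x ≠ 1 := (map_ne_one_iff ψ ψ.injective).mpr hx
  have hmn : m = 0 ↔ n = 0 := by
    rw [← IsMulTorsionFree.zpow_eq_one_iff_right hψx, h,
      IsMulTorsionFree.zpow_eq_one_iff_right hx]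
  rcases eq_or_ne m 0 with hm | hm
  · rw [hm, hmn.mp hm]
  have hmap : (Subgroup.centralizer {x}).map ψ.toMonoidHom = Subgroup.centralizer {x} := by
    rw [map_centralizer_singleton, ← centralizer_zpow_singleton (ψ x) hm, h,
      centralizer_zpow_singleton x (hmn.not.mp hm)]
  have hinj : Function.Injective fun k : ℤ ↦ x ^ k :=
    injective_zpow_iff_not_isOfFinOrder.mpr (not_isOfFinOrder_of_isMulTorsionFree hx)
  rcases apply_eq_or_eq_inv_of_map_centralizer_eq hx (hN x hx) ψ hmap with hfix | hinv
  · rw [hfix] at h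
    rw [hinj h]
  · rw [hinv, inv_zpow'] at h
    rw [← hinj h, abs_neg]

end Centralizer

section Balanced

variable {G G' N E Q : Type*} [Group G] [Group G'] [Group N] [Group E] [Group Q]

theorem isBalanced_iff_semiconjBy :
    IsBalanced G ↔ ∀ x : G, ¬ IsOfFinOrder x → ∀ (m n : ℤ) (g : G),
      SemiconjBy g (x ^ m) (x ^ n) → |m| = |n| := by
  simp only [IsBalanced, SemiconjBy, mul_inv_eq_iff_eq_mul, forall_exists_index]

theorem IsBalanced.abs_eq_of_semiconjBy (hG : IsBalanced G) {x g : G} (hx : ¬ IsOfFinOrder x)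
    {m n : ℤ} (h : SemiconjBy g (x ^ m) (x ^ n)) : |m| = |n| :=
  isBalanced_iff_semiconjBy.mp hG x hx m n g h

theorem isBalanced_of_commGroup (A : Type*) [CommGroup A] : IsBalanced A := by
  refine isBalanced_iff_semiconjBy.mpr fun x hx m n g h ↦ ?_
  rw [injective_zpow_iff_not_isOfFinOrder.mpr hx (semiconjBy_iff_eq.mp h)]

theorem IsBalanced.of_injective_s5 (hG' : IsBalanced G') (f : G →* G')
    (hf : Function.Injective f) : IsBalanced G := by
  refine isBalanced_iff_semiconjBy.mpr fun x hx m n g h ↦ ?_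
  refine hG'.abs_eq_of_semiconjBy (x := f x) (g := f g) (by rwa [hf.isOfFinOrder_iff]) ?_
  simpa only [map_zpow] using h.map f

theorem semiconjBy_pow_zpow {x g : G} {m n : ℤ} (h : SemiconjBy g (x ^ m) (x ^ n)) (k : ℕ) :
    SemiconjBy g ((x ^ k) ^ m) ((x ^ k) ^ n) := by
  simpa only [← zpow_natCast, zpow_comm x] using h.pow_right k

theorem semiconjBy_pow_zpow_pow {x g : G} {m n : ℤ} (h : SemiconjBy g (x ^ m) (x ^ n)) (k : ℕ) :
    SemiconjBy (g ^ k) (x ^ m ^ k) (x ^ n ^ k) := by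
  induction k with
  | zero => simp only [pow_zero, SemiconjBy.one_left]
  | succ k ih =>
    have hg : SemiconjBy g (x ^ m ^ (k + 1)) ((x ^ m ^ k) ^ n) := by
      rw [zpow_comm, pow_succ', zpow_mul]
      exact h.zpow_right (m ^ k)
    have hgk : SemiconjBy (g ^ k) ((x ^ m ^ k) ^ n) (x ^ n ^ (k + 1)) := by
      rw [pow_succ, zpow_mul]
      exact ih.zpow_right n
    rw [pow_succ g]
    exact hgk.mul_left hg

theorem IsBalanced.of_forall_exists_pow_mem {H : Subgroup G} (hH : IsBalanced H)
    (hpow : ∀ g : G, ∃ k ≠ 0, g ^ k ∈ H) : IsBalanced G := by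
  refine isBalanced_iff_semiconjBy.mpr fun x hx m n g h ↦ ?_
  obtain ⟨k, hk, hgk⟩ := hpow g
  obtain ⟨l, hl, hxl⟩ := hpow x
  have hconj : SemiconjBy (⟨g ^ k, hgk⟩ : H) ((⟨x ^ l, hxl⟩ : H) ^ m ^ k) (⟨x ^ l, hxl⟩ ^ n ^ k) :=
    Subtype.ext (semiconjBy_pow_zpow (semiconjBy_pow_zpow_pow h k) l)
  have hxl_inf : ¬ IsOfFinOrder (⟨x ^ l, hxl⟩ : H) := by
    rw [← H.subtype_injective.isOfFinOrder_iff, H.subtype_apply, isOfFinOrder_pow]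
    simp only [hx, hl, or_self, not_false_eq_true]
  have habs : |m| ^ k = |n| ^ k := by
    simpa only [abs_pow] using hH.abs_eq_of_semiconjBy hxl_inf hconj
  exact (pow_left_inj₀ (abs_nonneg m) (abs_nonneg n) hk).mp habs

theorem IsBalanced.of_groupExtension [IsMulTorsionFree N] (hQ : IsBalanced Q)
    (S : GroupExtension N E Q) (hN : HasCyclicCentralizers N) : IsBalanced E := by
  refine isBalanced_iff_semiconjBy.mpr fun x hx m n g h ↦ ?_
  by_cases hq : IsOfFinOrder (S.rightHom x)
  · obtain ⟨k, hk, hxk⟩ := isOfFinOrder_iff_pow_eq_one.mp hq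
    obtain ⟨y, hy⟩ : x ^ k ∈ S.inl.range := by
      rw [S.range_inl_eq_ker_rightHom, MonoidHom.mem_ker, map_pow, hxk]
    have hy_ne : y ≠ 1 := by
      rintro rfl
      exact hx (isOfFinOrder_iff_pow_eq_one.mpr ⟨k, hk, by rw [← hy, map_one]⟩)
    refine abs_eq_of_apply_zpow_eq_zpow hN (S.conjAct g) hy_ne (S.inl_injective ?_)
    rw [map_zpow, map_zpow, S.inl_conjAct_comm, conj_zpow, mul_inv_eq_iff_eq_mul, hy]
    exact semiconjBy_pow_zpow h k
  · refine hQ.abs_eq_of_semiconjBy (g := S.rightHom g) hq ?_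
    simpa only [map_zpow] using h.map S.rightHom

theorem balanced_of_virtually_free_by_cyclic_general [IsMulTorsionFree N]
    (hN : HasCyclicCentralizers N) (hQ : IsBalanced Q) (S : GroupExtension N E Q)
    (H : Subgroup G) (hpow : ∀ g : G, ∃ k ≠ 0, g ^ k ∈ H)
    (f : H →* E) (hf : Function.Injective f) : IsBalanced G :=
  ((hQ.of_groupExtension S hN).of_injective_s5 f hf).of_forall_exists_pow_mem hpow

end Balanced

/-- A group with a finite index subgroup isomorphic to `F ⋊ ℤ` for a free group `F`
(of arbitrary rank) is balanced; in particular every free-by-cyclic group `F ⋊ ℤ`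
is balanced. -/
theorem balanced_of_virtually_free_by_cyclic :
    (∀ (G : Type) [Group G] (H : Subgroup G), H.FiniteIndex →
      ∀ (β : Type) (φ : Multiplicative ℤ →* MulAut (FreeGroup β)),
        Nonempty (H ≃* SemidirectProduct (FreeGroup β) (Multiplicative ℤ) φ) →
        IsBalanced G) ∧
    (∀ (β : Type) (φ : Multiplicative ℤ →* MulAut (FreeGroup β)),
      IsBalanced (SemidirectProduct (FreeGroup β) (Multiplicative ℤ) φ)) := by
  have hF (β : Type) : HasCyclicCentralizers (FreeGroup β) := hasCyclicCentralizers_of_isFreeGroup _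
  have hℤ : IsBalanced (Multiplicative ℤ) := isBalanced_of_commGroup _
  exact ⟨fun G _ H hH β φ ⟨e⟩ ↦
    balanced_of_virtually_free_by_cyclic_general (hF β) hℤ (SemidirectProduct.toGroupExtension φ) H
      (fun g ↦ (Subgroup.exists_pow_mem_of_index_ne_zero hH.index_ne_zero g).imp
        fun k hk ↦ ⟨hk.1.ne', hk.2.2⟩) e e.injective,
    fun β φ ↦ hℤ.of_groupExtension (SemidirectProduct.toGroupExtension φ) (hF β)⟩
end

section
/- For every natural number n, every subgroup of GL(n, ℤ) is balanced. Equivalently, if g x^m g⁻¹ = x^n holds in a group G where x has infinite order and |m| ≠ |n|, then there is no injective homomorphism from G into GL(n, ℤ) for any n. -/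
/-!
Let `x ^ m` and `x ^ n` be conjugate with `|m| ≠ |n|`, and choose a prime power `p ^ e` dividing,
say, `m` but not `n`. In a quotient where the image of `x` has finite order `o`, the images of
`x ^ m` and `x ^ n` have orders `o / gcd o m` and `o / gcd o n`, so `gcd o m = gcd o n` and hence
`p ^ e` does not divide `o`. In `GL(n, ℤ / p ^ i)`, however, a matrix of order `c` modulo `p` has
order dividing `c * p ^ i`, because raising to the `p`-th power improves a congruence to `1` by one
power of `p`. Both facts together give `o ∣ c * p ^ e` for every `i`, so `x ^ (c * p ^ e)` is
congruent to `1` modulo every power of `p`, and `x` has finite order.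
-/

lemma dvd_mul_prime_pow_of_not_prime_pow_dvd {p e o c k : ℕ} (hp : p.Prime) (h : o ∣ c * p ^ k)
    (he : ¬ p ^ e ∣ o) : o ∣ c * p ^ e := by
  refine (Nat.dvd_iff_prime_pow_dvd_dvd _ _).mpr fun q j hq hj => ?_
  obtain rfl | hqp := eq_or_ne q p
  · have hje : j ≤ e := le_of_not_ge fun hej => he ((pow_dvd_pow q hej).trans hj)
    exact (pow_dvd_pow q hje).mul_left c
  · have hcop : (q ^ j).Coprime (p ^ k) := Nat.Coprime.pow j k ((Nat.coprime_primes hq hp).mpr hqp)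
    exact (hcop.dvd_of_dvd_mul_right (hj.trans h)).mul_right _

section Order

variable {G : Type*} [Group G]

lemma orderOf_zpow_of_isOfFinOrder {y : G} (hy : IsOfFinOrder y) (m : ℤ) :
    orderOf (y ^ m) = orderOf y / Int.gcd (orderOf y) m := by
  obtain ⟨k, rfl | rfl⟩ := m.eq_nat_or_neg <;> simp [hy.orderOf_pow]

lemma gcd_orderOf_eq_of_isConj_zpow {y : G} (hy : IsOfFinOrder y) {m n : ℤ}
    (h : IsConj (y ^ m) (y ^ n)) : Int.gcd (orderOf y) m = Int.gcd (orderOf y) n := by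
  have hdvd (i : ℤ) : Int.gcd (orderOf y) i ∣ orderOf y :=
    Int.natCast_dvd_natCast.mp (Int.gcd_dvd_left ..)
  obtain ⟨g, hg⟩ := h
  have hdiv := hg.orderOf_eq
  rw [orderOf_zpow_of_isOfFinOrder hy, orderOf_zpow_of_isOfFinOrder hy] at hdiv
  exact (Nat.div_eq_iff_eq_of_dvd_dvd hy.orderOf_pos.ne' (hdvd m) (hdvd n)).mp hdiv

lemma not_dvd_orderOf_of_dvd_of_isConj_zpow {y : G} (hy : IsOfFinOrder y) {m n : ℤ}
    (h : IsConj (y ^ m) (y ^ n)) {d : ℕ} (hm : (d : ℤ) ∣ m) (hn : ¬ (d : ℤ) ∣ n) :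
    ¬ d ∣ orderOf y := by
  intro hd
  have hgcd : (d : ℤ) ∣ Int.gcd (orderOf y) m := Int.dvd_coe_gcd (Int.natCast_dvd_natCast.mpr hd) hm
  rw [gcd_orderOf_eq_of_isConj_zpow hy h] at hgcd
  exact hn (hgcd.trans (Int.gcd_dvd_right ..))

lemma isOfFinOrder_of_isConj_zpow {x : G} {m n : ℤ} (h : IsConj (x ^ m) (x ^ n)) {p e : ℕ}
    (hp : p.Prime) (hm : ((p ^ e : ℕ) : ℤ) ∣ m) (hn : ¬ ((p ^ e : ℕ) : ℤ) ∣ n)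
    {ι : Type*} (N : ι → Subgroup G) [∀ i, (N i).Normal] (hN : ⨅ i, N i = ⊥) {c : ℕ} (hc : c ≠ 0)
    (hx : ∀ i, ∃ k, x ^ (c * p ^ k) ∈ N i) : IsOfFinOrder x := by
  suffices hmem : x ^ (c * p ^ e) ∈ ⨅ i, N i by
    rw [hN, Subgroup.mem_bot] at hmem
    exact isOfFinOrder_iff_pow_eq_one.mpr ⟨_, Nat.mul_pos hc.bot_lt (pow_pos hp.pos e), hmem⟩
  refine Subgroup.mem_iInf.mpr fun i => ?_
  obtain ⟨k, hk⟩ := hx i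
  set y : G ⧸ N i := (x : G ⧸ N i)
  have hyk : y ^ (c * p ^ k) = 1 := (QuotientGroup.eq_one_iff _).mpr hk
  have hfin : IsOfFinOrder y :=
    isOfFinOrder_iff_pow_eq_one.mpr ⟨_, Nat.mul_pos hc.bot_lt (pow_pos hp.pos k), hyk⟩
  have hconj : IsConj (y ^ m) (y ^ n) := (QuotientGroup.mk' (N i)).map_isConj h
  have horder : orderOf y ∣ c * p ^ e := dvd_mul_prime_pow_of_not_prime_pow_dvd hp
    (orderOf_dvd_of_pow_eq_one hyk) (not_dvd_orderOf_of_dvd_of_isConj_zpow hfin hconj hm hn)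
  exact (QuotientGroup.eq_one_iff _).mp (orderOf_dvd_iff_pow_eq_one.mp horder)

end Order

lemma IsBalanced.of_injective_s6 {G H : Type*} [Group G] [Group H] (hH : IsBalanced H) {φ : G →* H}
    (hφ : Function.Injective φ) : IsBalanced G := by
  rintro x hx m n ⟨g, hg⟩
  exact hH (φ x) (hφ.isOfFinOrder_iff.not.mpr hx) m n ⟨φ g, by simpa using congrArg φ hg⟩

lemma isBalanced_of_forall_prime {G : Type*} [Group G]
    (h : ∀ p : ℕ, p.Prime → ∃ N : ℕ → Subgroup G, (∀ i, (N i).Normal) ∧ ⨅ i, N i = ⊥ ∧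
      ∀ x : G, ∃ c ≠ 0, ∀ i, ∃ k, x ^ (c * p ^ k) ∈ N i) : IsBalanced G := by
  intro x hx m n hmn
  have hdvd {m n : ℤ} (hconj : IsConj (x ^ m) (x ^ n)) : m.natAbs ∣ n.natAbs := by
    refine (Nat.dvd_iff_prime_pow_dvd_dvd _ _).mpr fun p e hp hm => ?_
    rw [← Int.natCast_dvd] at hm ⊢
    by_contra hn
    obtain ⟨N, hnormal, hbot, htors⟩ := h p hp
    obtain ⟨c, hc, hxc⟩ := htors x
    exact hx (isOfFinOrder_of_isConj_zpow hconj hp hm hn N hbot hc hxc)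
  have hconj : IsConj (x ^ m) (x ^ n) := isConj_iff.mpr hmn
  rw [Int.abs_eq_natAbs, Int.abs_eq_natAbs, Nat.dvd_antisymm (hdvd hconj) (hdvd hconj.symm)]

section Ring

variable {A : Type*} [Ring A]

lemma natCast_pow_dvd_pow_sub_one {p : ℕ} {a : A} (h : (p : A) ∣ a - 1) (k : ℕ) :
    (p : A) ^ (k + 1) ∣ a ^ p ^ k - 1 := by
  obtain ⟨b, hb⟩ := h
  -- The commutative case in `ℤ[X]`, specialized at `X = b`, suffices since `a = 1 + p * b`.
  have hpoly : (p : Polynomial ℤ) ∣ (1 + (p : Polynomial ℤ) * Polynomial.X) - 1 := by simp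
  have heval := map_dvd (Polynomial.aeval b : Polynomial ℤ →ₐ[ℤ] A) (dvd_sub_pow_of_dvd_sub hpoly k)
  simpa [← hb] using heval

variable (A) in
/-- The principal congruence subgroup of level `q` of the unit group of `A`: the units congruent
to `1` modulo `q`. -/
def principalCongruenceSubgroup (q : ℕ) : Subgroup Aˣ where
  carrier := {u | (q : A) ∣ u - 1}
  one_mem' := by simp
  mul_mem' {u v} hu hv := by
    have huv : ((u * v : Aˣ) : A) - 1 = (u - 1) * v + (v - 1) := by push_cast; noncomm_ring
    rw [Set.mem_ofPred_eq, huv]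
    exact (hu.mul_right _).add hv
  inv_mem' {u} hu := by
    have hinv : ((u⁻¹ : Aˣ) : A) - 1 = -((u - 1) * (u⁻¹ : Aˣ)) := by simp [sub_mul]
    rw [Set.mem_ofPred_eq, hinv]
    exact (hu.mul_right _).neg_right

lemma mem_principalCongruenceSubgroup {q : ℕ} {u : Aˣ} :
    u ∈ principalCongruenceSubgroup A q ↔ (q : A) ∣ u - 1 := Iff.rfl

instance principalCongruenceSubgroup_normal (q : ℕ) : (principalCongruenceSubgroup A q).Normal where
  conj_mem u hu g := by
    obtain ⟨a, ha⟩ := mem_principalCongruenceSubgroup.mp hu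
    refine mem_principalCongruenceSubgroup.mpr ⟨g * a * (g⁻¹ : Aˣ), ?_⟩
    calc ((g * u * g⁻¹ : Aˣ) : A) - 1 = g * (u - 1) * (g⁻¹ : Aˣ) := by simp [mul_sub, sub_mul]
      _ = q * (g * a * (g⁻¹ : Aˣ)) := by rw [ha, ← mul_assoc, ← Nat.cast_comm]; simp [mul_assoc]

lemma iInf_principalCongruenceSubgroup_pow_eq_bot {p : ℕ}
    (hsep : ∀ a : A, (∀ k : ℕ, (p : A) ^ k ∣ a) → a = 0) :
    ⨅ i : ℕ, principalCongruenceSubgroup A (p ^ i) = ⊥ := by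
  refine (Subgroup.eq_bot_iff_forall _).mpr fun u hu => ?_
  refine Units.ext (sub_eq_zero.mp (hsep _ fun k => ?_))
  simpa [mem_principalCongruenceSubgroup] using Subgroup.mem_iInf.mp hu k

theorem subgroup_GL_int_balanced_general
    (htors : ∀ p : ℕ, p.Prime → ∀ u : Aˣ, ∃ c ≠ 0, (p : A) ∣ (u : A) ^ c - 1)
    (hsep : ∀ p : ℕ, p.Prime → ∀ a : A, (∀ k : ℕ, (p : A) ^ k ∣ a) → a = 0)
    {G : Type*} [Group G] {φ : G →* Aˣ} (hφ : Function.Injective φ) : IsBalanced G := by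
  refine IsBalanced.of_injective_s6 (isBalanced_of_forall_prime fun p hp => ?_) hφ
  refine ⟨fun i => principalCongruenceSubgroup A (p ^ i), inferInstance,
    iInf_principalCongruenceSubgroup_pow_eq_bot (hsep p hp), fun u => ?_⟩
  obtain ⟨c, hc, hdvd⟩ := htors p hp u
  refine ⟨c, hc, fun i => ⟨i, mem_principalCongruenceSubgroup.mpr ?_⟩⟩
  have hi := natCast_pow_dvd_pow_sub_one hdvd i
  rw [← pow_mul] at hi
  simpa using (pow_dvd_pow (p : A) i.le_succ).trans hi

lemma mem_span_natCast_smul_top {q : ℕ} {a : A} :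
    a ∈ Ideal.span {(q : ℤ)} • (⊤ : Submodule ℤ A) ↔ (q : A) ∣ a := by
  simp [Submodule.ideal_span_singleton_smul, Submodule.mem_smul_pointwise_iff_exists,
    Dvd.dvd, eq_comm]

lemma exists_natCast_dvd_units_pow_sub_one [Module.Finite ℤ A] {q : ℕ} (hq : q ≠ 0) (u : Aˣ) :
    ∃ c ≠ 0, (q : A) ∣ (u : A) ^ c - 1 := by
  set S := Ideal.span {(q : ℤ)} • (⊤ : Submodule ℤ A)
  have hfin : Finite (A ⧸ S) := by
    have : NeZero q := ⟨hq⟩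
    have : Finite (ℤ ⧸ Ideal.span {(q : ℤ)}) :=
      .of_equiv _ (Int.quotientSpanNatEquivZMod q).symm.toEquiv
    exact Submodule.finite_quotient_smul _ Module.Finite.fg_top
  obtain ⟨i, j, hij, heq⟩ := Set.finite_univ.exists_lt_map_eq_of_forall_mem
    (f := fun i : ℕ => S.mkQ ((u : A) ^ i)) fun _ => Set.mem_univ _
  have hdvd : (q : A) ∣ (u : A) ^ j - (u : A) ^ i :=
    mem_span_natCast_smul_top.mp ((Submodule.Quotient.eq S).mp heq.symm)
  refine ⟨j - i, Nat.sub_ne_zero_of_lt hij, ?_⟩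
  have hfactor : (u : A) ^ j - (u : A) ^ i = ((u : A) ^ (j - i) - 1) * (u ^ i : Aˣ) := by
    rw [sub_mul, one_mul, Units.val_pow_eq_pow_val, ← pow_add, Nat.sub_add_cancel hij.le]
  rwa [hfactor, Units.dvd_mul_right] at hdvd

lemma eq_zero_of_forall_natCast_pow_dvd [Module.Finite ℤ A] [Module.IsTorsionFree ℤ A] {q : ℕ}
    (hq : q ≠ 1) {a : A} (h : ∀ k : ℕ, (q : A) ^ k ∣ a) : a = 0 := by
  have hspan : Ideal.span {(q : ℤ)} ≠ ⊤ := by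
    simpa [Ideal.span_singleton_eq_top, Int.isUnit_iff_natAbs_eq] using hq
  rw [← Submodule.mem_bot ℤ, ← Ideal.iInf_pow_smul_eq_bot_of_isTorsionFree _ hspan,
    Submodule.mem_iInf]
  intro k
  rw [Ideal.span_singleton_pow, ← Nat.cast_pow, mem_span_natCast_smul_top, Nat.cast_pow]
  exact h k

theorem isBalanced_of_injective_units [Module.Finite ℤ A] [Module.IsTorsionFree ℤ A]
    {G : Type*} [Group G] {φ : G →* Aˣ} (hφ : Function.Injective φ) : IsBalanced G :=
  subgroup_GL_int_balanced_general
    (fun _ hp => exists_natCast_dvd_units_pow_sub_one hp.ne_zero)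
    (fun _ hp _ => eq_zero_of_forall_natCast_pow_dvd hp.ne_one) hφ

end Ring

/-- Every subgroup of `GL(n, ℤ)` is balanced; equivalently, if `g * x^m * g⁻¹ = x^n`
holds in a group `G` with `x` of infinite order and `|m| ≠ |n|`, then `G` admits no
injective homomorphism into any `GL(n, ℤ)`. -/
theorem subgroup_GL_int_balanced :
    (∀ (n : ℕ) (H : Subgroup (Matrix.GeneralLinearGroup (Fin n) ℤ)), IsBalanced H) ∧
    (∀ (G : Type) [Group G] (x g : G) (m n : ℤ), ¬ IsOfFinOrder x →
      g * x ^ m * g⁻¹ = x ^ n → |m| ≠ |n| →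
      ∀ (k : ℕ) (φ : G →* Matrix.GeneralLinearGroup (Fin k) ℤ),
        ¬ Function.Injective φ) :=
  ⟨fun _ H => isBalanced_of_injective_units H.subtype_injective,
    fun _ _ x g m n hx h hmn _ _ hφ => hmn (isBalanced_of_injective_units hφ x hx m n ⟨g, h⟩)⟩
end

section
/- Let a be an element of infinite order in a group G. Then: (i) the intersector I_G(a) = {g ∈ G : g⟨a⟩g⁻¹ ∩ ⟨a⟩ ≠ {1}} is a subgroup of G containing ⟨a⟩; (ii) if b ∈ G and a^k = b^l for some nonzero integers k, l, then I_G(a) = I_G(b); (iii) for any g ∈ G, I_G(g a g⁻¹) = g I_G(a) g⁻¹. -/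
/-- The intersector of an element `a` in a group `G`: the set of `g ∈ G` such that
`g⟨a⟩g⁻¹ ∩ ⟨a⟩ ≠ {1}`. -/
def intersector {G : Type*} [Group G] (a : G) : Set G :=
  {g : G | ∃ x : G, x ∈ Subgroup.zpowers a ∧ x ≠ 1 ∧ g * x * g⁻¹ ∈ Subgroup.zpowers a}

/-!
For `a` of infinite order, a nontrivial subgroup of `⟨a⟩` has finite index, so `g⟨a⟩g⁻¹` and `⟨a⟩`
intersect nontrivially exactly when they are commensurable. The intersector of `a` is therefore the
commensurator of `⟨a⟩`, which is a subgroup and depends only on the commensurability class of `⟨a⟩`.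
-/

open Subgroup
open Subgroup.Commensurable (commensurator commensurator_mem_iff)
open scoped Pointwise

section Zpowers

variable {G : Type*} [Group G] {a b : G} {H : Subgroup G}

theorem relIndex_zpowers_ne_zero_of_zpow_mem {k : ℤ} (hk : k ≠ 0) (h : a ^ k ∈ H) :
    H.relIndex (zpowers a) ≠ 0 := by
  have hle : zpowers (Multiplicative.ofAdd k) ≤ H.comap (zpowersHom G a) := by
    rwa [zpowers_le, mem_comap, zpowersHom_apply, toAdd_ofAdd]
  have hindex : (zpowers (Multiplicative.ofAdd k)).index = k.natAbs := Int.index_zmultiples k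
  rw [← range_zpowersHom, ← index_comap]
  exact ne_zero_of_dvd_ne_zero (hindex.trans_ne (Int.natAbs_ne_zero.mpr hk)) (index_dvd_of_le hle)

theorem relIndex_zpowers_ne_zero_iff (ha : ¬ IsOfFinOrder a) :
    H.relIndex (zpowers a) ≠ 0 ↔ H ⊓ zpowers a ≠ ⊥ := by
  constructor
  · intro hindex hbot
    rw [← inf_relIndex_right, hbot, relIndex_bot_left, Nat.card_zpowers] at hindex
    exact ha (orderOf_ne_zero_iff.mp hindex)
  · intro h
    obtain ⟨_, ⟨hmem, k, rfl⟩, hne⟩ := (bot_or_exists_ne_one _).resolve_left h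
    refine relIndex_zpowers_ne_zero_of_zpow_mem ?_ hmem
    rintro rfl
    exact hne (zpow_zero a)

theorem commensurable_zpowers_iff (ha : ¬ IsOfFinOrder a) (hb : ¬ IsOfFinOrder b) :
    Commensurable (zpowers a) (zpowers b) ↔ zpowers a ⊓ zpowers b ≠ ⊥ := by
  rw [Commensurable, relIndex_zpowers_ne_zero_iff ha, relIndex_zpowers_ne_zero_iff hb,
    inf_comm (zpowers b), and_self]

theorem commensurable_zpowers_of_zpow_eq_zpow {k l : ℤ} (hk : k ≠ 0) (hl : l ≠ 0)
    (h : a ^ k = b ^ l) : Commensurable (zpowers a) (zpowers b) :=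
  ⟨relIndex_zpowers_ne_zero_of_zpow_mem hl (h ▸ zpow_mem_zpowers a k),
    relIndex_zpowers_ne_zero_of_zpow_mem hk (h ▸ zpow_mem_zpowers b l)⟩

theorem isOfFinOrder_zpow_iff {k : ℤ} (hk : k ≠ 0) : IsOfFinOrder (a ^ k) ↔ IsOfFinOrder a := by
  refine ⟨fun h => ?_, fun h => h.zpow⟩
  obtain ⟨n, hn, hpow⟩ := isOfFinOrder_iff_zpow_eq_one.mp h
  exact isOfFinOrder_iff_zpow_eq_one.mpr ⟨k * n, mul_ne_zero hk hn, by rw [zpow_mul, hpow]⟩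

theorem conjAct_smul_zpowers (g a : G) :
    ConjAct.toConjAct g • zpowers a = zpowers (g * a * g⁻¹) :=
  MonoidHom.map_zpowers _ a

theorem le_commensurator (H : Subgroup G) : H ≤ commensurator H := fun h hh => by
  rw [commensurator_mem_iff, conjAct_pointwise_smul_eq_self (le_normalizer hh)]

end Zpowers

section Intersector

variable {G G' : Type*} [Group G] [Group G'] {a b g : G}

theorem mem_intersector_iff : g ∈ intersector a ↔ zpowers (g * a * g⁻¹) ⊓ zpowers a ≠ ⊥ := by
  rw [← conjAct_smul_zpowers]
  constructor
  · rintro ⟨x, hx, hne, hconj⟩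
    have hmem : g * x * g⁻¹ ∈ ConjAct.toConjAct g • zpowers a :=
      smul_mem_pointwise_smul x _ _ hx
    exact fun hbot => hne (conj_eq_one_iff.mp ((eq_bot_iff_forall _).mp hbot _ ⟨hmem, hconj⟩))
  · intro h
    obtain ⟨_, ⟨hmem, hconj⟩, hne⟩ := (bot_or_exists_ne_one _).resolve_left h
    obtain ⟨x, hx, rfl⟩ := (mem_smul_pointwise_iff_exists _ _ _).mp hmem
    exact ⟨x, hx, fun hx_one => hne (by rw [hx_one, smul_one]), hconj⟩

theorem coe_commensurator_zpowers (ha : ¬ IsOfFinOrder a) :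
    (commensurator (zpowers a) : Set G) = intersector a := by
  ext g
  have hconj : ¬ IsOfFinOrder (g * a * g⁻¹) :=
    mt (Function.Injective.isOfFinOrder_iff (f := (MulAut.conj g).toMonoidHom)
      (MulAut.conj g).injective).mp ha
  rw [SetLike.mem_coe, commensurator_mem_iff, conjAct_smul_zpowers,
    commensurable_zpowers_iff hconj ha, mem_intersector_iff]

theorem intersector_eq_of_zpow_eq_zpow (ha : ¬ IsOfFinOrder a) {k l : ℤ} (hk : k ≠ 0)
    (hl : l ≠ 0) (h : a ^ k = b ^ l) : intersector a = intersector b := by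
  have hb : ¬ IsOfFinOrder b := by
    rwa [← isOfFinOrder_zpow_iff hl, ← h, isOfFinOrder_zpow_iff hk]
  rw [← coe_commensurator_zpowers ha, ← coe_commensurator_zpowers hb,
    (commensurable_zpowers_of_zpow_eq_zpow hk hl h).eq]

theorem map_mem_intersector_iff {f : G →* G'} (hf : Function.Injective f) :
    f g ∈ intersector (f a) ↔ g ∈ intersector a := by
  simp only [mem_intersector_iff, ← map_mul, ← map_inv, ← MonoidHom.map_zpowers,
    ← map_inf _ _ f hf, ne_eq, map_eq_bot_iff_of_injective _ hf]

theorem intersector_map_mulEquiv (f : G ≃* G') (a : G) :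
    intersector (f a) = f '' intersector a := by
  ext y
  obtain ⟨x, rfl⟩ := f.surjective y
  rw [f.injective.mem_set_image]
  exact map_mem_intersector_iff (f := f.toMonoidHom) f.injective

end Intersector

/-- For `a` of infinite order: (i) the intersector `I_G(a)` is a subgroup of `G`
containing `⟨a⟩`; (ii) if `a^k = b^l` with `k, l ≠ 0` then `I_G(a) = I_G(b)`;
(iii) `I_G(g a g⁻¹) = g I_G(a) g⁻¹`. -/
theorem intersector_properties {G : Type*} [Group G] (a : G) (ha : ¬ IsOfFinOrder a) :
    (∃ S : Subgroup G, (S : Set G) = intersector a ∧ Subgroup.zpowers a ≤ S) ∧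
    (∀ (b : G) (k l : ℤ), k ≠ 0 → l ≠ 0 → a ^ k = b ^ l →
      intersector a = intersector b) ∧
    (∀ g : G, intersector (g * a * g⁻¹) = (fun x => g * x * g⁻¹) '' intersector a) := by
  refine ⟨⟨commensurator (zpowers a), coe_commensurator_zpowers ha, le_commensurator _⟩, ?_, ?_⟩
  · intro b k l hk hl h
    exact intersector_eq_of_zpow_eq_zpow ha hk hl h
  · intro g
    exact intersector_map_mulEquiv (MulAut.conj g) a
end

section
/- Let a be an element of infinite order in a group G. Then there is a group homomorphism Δ from the intersector I_G(a) to the multiplicative group ℚˣ of nonzero rationals such that whenever g ∈ I_G(a) and m, n are nonzero integers with g a^m g⁻¹ = a^n, one has Δ(g) = m/n. (In particular the ratio m/n depends only on g and not on the choice of m, n.) -/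
/-!
The pairs `(g, m / n)` with `m, n ≠ 0` and `g * a ^ m * g⁻¹ = a ^ n` form a subgroup of `G × ℚˣ`.
When `a` has infinite order, `a ^ m = a ^ n` forces `m = n`, so the first projection is injective
on this subgroup, which is therefore the graph of a homomorphism defined on the intersector.
-/

section GraphSubgroup

variable {G H : Type*} [Group G] [Group H] {Γ : Subgroup (G × H)}

/-- The homomorphism whose graph is the subgroup `Γ` of `G × H`. Its domain is the image of `Γ` in
`G`, unlike in `Subgroup.exists_eq_graph`, where `Γ` has to project onto `G`. -/
noncomputable def homOfInjectiveFst
    (hΓ : Function.Injective ((MonoidHom.fst G H).domRestrict Γ)) :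
    ((MonoidHom.fst G H).domRestrict Γ).range →* H :=
  ((MonoidHom.snd G H).domRestrict Γ).comp (MonoidHom.ofInjective hΓ).symm.toMonoidHom

theorem homOfInjectiveFst_eq (hΓ : Function.Injective ((MonoidHom.fst G H).domRestrict Γ))
    {x : ((MonoidHom.fst G H).domRestrict Γ).range} {y : H} (hxy : ((x : G), y) ∈ Γ) :
    homOfInjectiveFst hΓ x = y := by
  have hx : (MonoidHom.ofInjective hΓ).symm x = ⟨(x, y), hxy⟩ :=
    (MulEquiv.symm_apply_eq _).2 (Subtype.ext rfl)
  exact congrArg (fun p : Γ => (p : G × H).2) hx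

end GraphSubgroup

section Intersector

variable {G : Type*} [Group G] {a g h : G}

theorem semiconjBy_mul_zpow_mul {b c : G} {m n p q : ℤ} (hg : SemiconjBy g (b ^ m) (c ^ n))
    (hh : SemiconjBy h (a ^ p) (b ^ q)) : SemiconjBy (g * h) (a ^ (m * p)) (c ^ (n * q)) := by
  have hh' : SemiconjBy h (a ^ (m * p)) (b ^ (m * q)) := by
    simpa only [← zpow_mul, mul_comm] using hh.zpow_right m
  have hg' : SemiconjBy g (b ^ (m * q)) (c ^ (n * q)) := by
    simpa only [← zpow_mul] using hg.zpow_right q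
  exact hg'.mul_left hh'

theorem mem_intersector_iff_s8 (ha : ¬ IsOfFinOrder a) :
    g ∈ intersector a ↔ ∃ m n : ℤ, m ≠ 0 ∧ n ≠ 0 ∧ SemiconjBy g (a ^ m) (a ^ n) := by
  have zpow_eq_one {k : ℤ} : a ^ k = 1 ↔ k = 0 :=
    (injective_zpow_iff_not_isOfFinOrder.2 ha).eq_iff' (zpow_zero a)
  constructor
  · rintro ⟨_, ⟨m, rfl⟩, hm, n, hn⟩
    have hmn : SemiconjBy g (a ^ m) (a ^ n) := mul_inv_eq_iff_eq_mul.1 hn.symm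
    have hn' : a ^ n ≠ 1 := mt hmn.eq_one_iff.2 hm
    exact ⟨m, n, mt zpow_eq_one.2 hm, mt zpow_eq_one.2 hn', hmn⟩
  · rintro ⟨m, n, hm, -, hmn⟩
    exact ⟨a ^ m, ⟨m, rfl⟩, mt zpow_eq_one.1 hm, n, (mul_inv_eq_iff_eq_mul.2 hmn).symm⟩

/-- The graph of the modular homomorphism of `a`, as a subgroup of `G × ℚˣ`. It is a subgroup for
every `a`, but single-valued over `G` only when `a` has infinite order. -/
def modularGraph (a : G) : Subgroup (G × ℚˣ) where
  carrier := {x | ∃ m n : ℤ, m ≠ 0 ∧ n ≠ 0 ∧ SemiconjBy x.1 (a ^ m) (a ^ n) ∧ (x.2 : ℚ) = m / n}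
  one_mem' := ⟨1, 1, one_ne_zero, one_ne_zero, SemiconjBy.one_left _, by simp⟩
  mul_mem' := by
    rintro x y ⟨m, n, hm, hn, hx, hxr⟩ ⟨p, q, hp, hq, hy, hyr⟩
    refine ⟨m * p, n * q, mul_ne_zero hm hp, mul_ne_zero hn hq, semiconjBy_mul_zpow_mul hx hy, ?_⟩
    simp [hxr, hyr, div_mul_div_comm]
  inv_mem' := by
    rintro x ⟨m, n, hm, hn, hx, hxr⟩
    exact ⟨n, m, hn, hm, hx.inv_symm_left, by simp [hxr]⟩

theorem mk_div_mem_modularGraph {m n : ℤ} (hm : m ≠ 0) (hn : n ≠ 0)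
    (hmn : SemiconjBy g (a ^ m) (a ^ n)) :
    (g, Units.mk0 (m / n : ℚ) (div_ne_zero (Int.cast_ne_zero.2 hm) (Int.cast_ne_zero.2 hn))) ∈
      modularGraph a :=
  ⟨m, n, hm, hn, hmn, rfl⟩

theorem fst_domRestrict_modularGraph_injective (ha : ¬ IsOfFinOrder a) :
    Function.Injective ((MonoidHom.fst G ℚˣ).domRestrict (modularGraph a)) := by
  rw [injective_iff_map_eq_one]
  rintro ⟨⟨g, r⟩, m, n, -, hn, hmn, hr⟩ (rfl : g = 1)
  have hpow : a ^ m = a ^ n := by simpa [SemiconjBy] using hmn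
  obtain rfl : m = n := injective_zpow_iff_not_isOfFinOrder.2 ha hpow
  have hr1 : r = 1 := Units.ext (hr.trans (div_self (Int.cast_ne_zero.2 hn)))
  exact Subtype.ext (Prod.ext rfl hr1)

/-- The intersector of `a` as a subgroup, obtained as the image of `modularGraph a` in `G`. For
`a` of finite order it is all of `G`, which may be larger than `intersector a`. -/
def intersectorSubgroup (a : G) : Subgroup G :=
  ((MonoidHom.fst G ℚˣ).domRestrict (modularGraph a)).range

theorem coe_intersectorSubgroup (ha : ¬ IsOfFinOrder a) :
    (intersectorSubgroup a : Set G) = intersector a := by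
  ext g
  rw [mem_intersector_iff_s8 ha]
  constructor
  · rintro ⟨⟨⟨g, r⟩, m, n, hm, hn, hmn, -⟩, rfl⟩
    exact ⟨m, n, hm, hn, hmn⟩
  · rintro ⟨m, n, hm, hn, hmn⟩
    exact ⟨⟨_, mk_div_mem_modularGraph hm hn hmn⟩, rfl⟩

/-- The modular homomorphism `Δ` of an element `a` of infinite order, sending `g` to `m / n` when
`g * a ^ m * g⁻¹ = a ^ n` with `m, n ≠ 0`. -/
noncomputable def modularHom (ha : ¬ IsOfFinOrder a) : intersectorSubgroup a →* ℚˣ :=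
  homOfInjectiveFst (fst_domRestrict_modularGraph_injective ha)

theorem modularHom_eq_div (ha : ¬ IsOfFinOrder a) {x : intersectorSubgroup a} {m n : ℤ}
    (hm : m ≠ 0) (hn : n ≠ 0) (hmn : SemiconjBy (x : G) (a ^ m) (a ^ n)) :
    (modularHom ha x : ℚ) = m / n :=
  congrArg Units.val (homOfInjectiveFst_eq _ (mk_div_mem_modularGraph hm hn hmn))

end Intersector

/-- For `a` of infinite order, the intersector `I_G(a)` is a subgroup, and there is a
group homomorphism `Δ : I_G(a) →* ℚˣ` (the modular homomorphism) such that whenever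
`g ∈ I_G(a)` and `g * a^m * g⁻¹ = a^n` with `m, n ≠ 0`, one has `Δ(g) = m / n`. -/
theorem modular_homomorphism_exists {G : Type*} [Group G] (a : G)
    (ha : ¬ IsOfFinOrder a) :
    ∃ S : Subgroup G, (S : Set G) = intersector a ∧
      ∃ Δ : S →* ℚˣ, ∀ (g : S) (m n : ℤ), m ≠ 0 → n ≠ 0 →
        (g : G) * a ^ m * (g : G)⁻¹ = a ^ n → ((Δ g : ℚˣ) : ℚ) = (m : ℚ) / (n : ℚ) :=
  ⟨intersectorSubgroup a, coe_intersectorSubgroup ha, modularHom ha, fun _ _ _ hm hn hmn =>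
    modularHom_eq_div ha hm hn (mul_inv_eq_iff_eq_mul.1 hmn)⟩
end

section
/- Let r, s be nonzero coprime integers with |r| ≠ |s| and let G_{r,s} = A ⋊ ℤ be the associated semidirect product. If φ is a surjective homomorphism from G_{r,s} onto a group Q such that the image φ((1, 0)) of the element (1, 0) (where 1 ∈ A ⊆ ℚ) has infinite order, then φ is an isomorphism. -/
/-- The rational `s / r` as a unit of `ℚ` (junk value `1` if `s / r = 0`). -/
def grsUnit (r s : ℤ) : ℚˣ :=
  if h : ((s : ℚ) / (r : ℚ)) = 0 then 1 else Units.mk0 _ h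

/-- Multiplication by `s / r` as an automorphism of the additive group `ℚ`,
viewed multiplicatively. -/
def grsAut (r s : ℤ) : MulAut (Multiplicative ℚ) :=
  AddEquiv.toMultiplicative (DistribMulAction.toAddAut ℚˣ ℚ (grsUnit r s))

/-- The action of `ℤ` on `ℚ` in which the generator acts by multiplication by `s / r`. -/
def grsAction (r s : ℤ) : Multiplicative ℤ →* MulAut (Multiplicative ℚ) :=
  zpowersHom (MulAut (Multiplicative ℚ)) (grsAut r s)

/-- The ambient semidirect product `ℚ ⋊ ℤ`, with the generator of `ℤ` acting on `ℚ`
by multiplication by `s / r`. -/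
abbrev GrsAmbient (r s : ℤ) : Type :=
  SemidirectProduct (Multiplicative ℚ) (Multiplicative ℤ) (grsAction r s)

/-- The element `(1, e)` of `ℚ ⋊ ℤ`. -/
def grsA (r s : ℤ) : GrsAmbient r s :=
  ⟨Multiplicative.ofAdd (1 : ℚ), 1⟩

/-- The element `(0, t)` of `ℚ ⋊ ℤ`. -/
def grsT (r s : ℤ) : GrsAmbient r s :=
  ⟨1, Multiplicative.ofAdd (1 : ℤ)⟩

/-- The group `G_{r,s} = ℤ[1/(rs)] ⋊ ℤ`, realised as the subgroup of `ℚ ⋊ ℤ`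
generated by the elements `(1, e)` and `(0, t)` (for coprime `r, s` the subgroup of
`ℚ` generated by the `ℤ`-orbit of `1` under multiplication by `s/r` is exactly
`ℤ[1/(rs)]`). -/
def Grs (r s : ℤ) : Subgroup (GrsAmbient r s) :=
  Subgroup.closure {grsA r s, grsT r s}

/-- The element `(1, e)` of `G_{r,s}`. -/
def grsOne (r s : ℤ) : Grs r s :=
  ⟨grsA r s, Subgroup.subset_closure (Set.mem_insert _ _)⟩

/-!
A homomorphism `φ` sending `(1, e)` to an element of infinite order is injective on the rational
part `A` of the group, since every nontrivial `x ∈ A` has a power equal to a nontrivial power of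
`(1, e)`. So `ker φ` and `A` are normal subgroups meeting trivially, hence they commute. As `s / r`
is not a root of unity, only elements of `A` commute with `(1, e)`; thus `ker φ ≤ A`, and `ker φ`
is trivial.
-/

theorem injective_of_not_isOfFinOrder_of_centralizer_le {G Q : Type*} [Group G] [Group Q]
    {A : Subgroup G} [A.Normal] {a : G} (hcentralizer : Subgroup.centralizer {a} ≤ A)
    (hpow : ∀ x ∈ A, x ≠ 1 → ∃ m n : ℤ, n ≠ 0 ∧ x ^ m = a ^ n)
    (φ : G →* Q) (hφa : ¬ IsOfFinOrder (φ a)) : Function.Injective φ := by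
  have hdisj : Disjoint A φ.ker := by
    refine Subgroup.disjoint_def.2 fun {x} hxA hxker ↦ ?_
    by_contra hx
    obtain ⟨m, n, hn, hmn⟩ := hpow x hxA hx
    refine hφa (isOfFinOrder_iff_zpow_eq_one.2 ⟨n, hn, ?_⟩)
    rw [← map_zpow, ← hmn, map_zpow, MonoidHom.mem_ker.1 hxker, one_zpow]
  have haA : a ∈ A := hcentralizer (Subgroup.mem_centralizer_singleton_iff.2 rfl)
  have hker : φ.ker ≤ A := fun x hx ↦ hcentralizer <| Subgroup.mem_centralizer_singleton_iff.2
    (Subgroup.commute_of_normal_of_disjoint A φ.ker ‹_› φ.normal_ker hdisj a x haA hx).symm.eq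
  exact (MonoidHom.ker_eq_bot_iff φ).1 (disjoint_self.1 (hdisj.mono_left hker))

theorem coe_grsUnit {r s : ℤ} (hr : r ≠ 0) (hs : s ≠ 0) : (grsUnit r s : ℚ) = s / r := by
  have hsr : (s : ℚ) / r ≠ 0 := div_ne_zero (Int.cast_ne_zero.2 hs) (Int.cast_ne_zero.2 hr)
  rw [grsUnit, dif_neg hsr, Units.val_mk0]

theorem coe_grsUnit_zpow_eq_one_iff {r s : ℤ} (hr : r ≠ 0) (hs : s ≠ 0) (hne : |r| ≠ |s|)
    {n : ℤ} : (grsUnit r s : ℚ) ^ n = 1 ↔ n = 0 := by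
  have habs : |(s : ℚ) / r| ≠ 1 := by
    rw [abs_div, Ne, div_eq_one_iff_eq (by simpa using hr)]
    exact_mod_cast hne.symm
  refine ⟨fun h ↦ (zpow_eq_one_iff_right₀ (abs_nonneg _) habs).1 ?_, fun h ↦ by rw [h, zpow_zero]⟩
  rw [← abs_zpow, ← coe_grsUnit hr hs, h, abs_one]

theorem toAdd_grsAction_apply (r s : ℤ) (n : Multiplicative ℤ) (x : Multiplicative ℚ) :
    (grsAction r s n x).toAdd = (grsUnit r s : ℚ) ^ n.toAdd * x.toAdd := by
  let scaling : ℚˣ →* MulAut (Multiplicative ℚ) :=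
    (MulAutMultiplicative ℚ).symm.toMonoidHom.comp (DistribMulAction.toAddAut ℚˣ ℚ)
  have hzpow : grsAction r s n = scaling (grsUnit r s ^ n.toAdd) :=
    (map_zpow scaling _ _).symm
  rw [hzpow, ← Units.val_zpow_eq_zpow_val]
  rfl

theorem right_eq_one_of_commute_grsA {r s : ℤ} (hr : r ≠ 0) (hs : s ≠ 0) (hne : |r| ≠ |s|)
    {g : GrsAmbient r s} (hg : Commute g (grsA r s)) : g.right = 1 := by
  have hleft : g.left.toAdd + (grsUnit r s : ℚ) ^ g.right.toAdd = 1 + g.left.toAdd := by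
    simpa [grsA, toAdd_grsAction_apply] using congrArg (fun z ↦ z.left.toAdd) hg.eq
  have hscale : (grsUnit r s : ℚ) ^ g.right.toAdd = 1 := by linarith
  exact (coe_grsUnit_zpow_eq_one_iff hr hs hne).1 hscale

theorem inl_zpow_den_eq_grsA_zpow_num (r s : ℤ) (x : ℚ) :
    (SemidirectProduct.inl (Multiplicative.ofAdd x) : GrsAmbient r s) ^ (x.den : ℤ) =
      grsA r s ^ x.num := by
  have hgrsA : grsA r s = SemidirectProduct.inl (Multiplicative.ofAdd 1) := rfl
  rw [hgrsA, ← map_zpow SemidirectProduct.inl, ← map_zpow SemidirectProduct.inl, ← ofAdd_zsmul,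
    ← ofAdd_zsmul]
  simp [Rat.den_mul_eq_num]

theorem exists_zpow_eq_grsA_zpow {r s : ℤ} {g : GrsAmbient r s} (hright : g.right = 1)
    (hg : g ≠ 1) : ∃ m n : ℤ, n ≠ 0 ∧ g ^ m = grsA r s ^ n := by
  obtain ⟨x, rfl⟩ : g ∈ (SemidirectProduct.inl : Multiplicative ℚ →* GrsAmbient r s).range := by
    rwa [SemidirectProduct.range_inl_eq_ker_rightHom]
  refine ⟨_, _, Rat.num_ne_zero.2 fun hx ↦ hg ?_, inl_zpow_den_eq_grsA_zpow_num r s x.toAdd⟩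
  rw [toAdd_eq_zero.1 hx, map_one]

theorem grs_surjective_hom_is_iso_general {r s : ℤ} (hr : r ≠ 0) (hs : s ≠ 0) (hne : |r| ≠ |s|)
    {H : Subgroup (GrsAmbient r s)} (hH : grsA r s ∈ H) {Q : Type*} [Group Q] (φ : H →* Q)
    (hord : ¬ IsOfFinOrder (φ ⟨grsA r s, hH⟩)) : Function.Injective φ := by
  let rationalPart : Subgroup H := (SemidirectProduct.rightHom.comp H.subtype).ker
  have hcentralizer : Subgroup.centralizer {⟨grsA r s, hH⟩} ≤ rationalPart := fun g hg ↦
    have hcomm : Commute g ⟨grsA r s, hH⟩ := Subgroup.mem_centralizer_singleton_iff.1 hg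
    right_eq_one_of_commute_grsA hr hs hne (hcomm.map H.subtype)
  refine injective_of_not_isOfFinOrder_of_centralizer_le hcentralizer (fun g hright hg ↦ ?_) φ hord
  obtain ⟨m, n, hn, hmn⟩ :=
    exists_zpow_eq_grsA_zpow (g := g.1) hright (OneMemClass.coe_eq_one.not.2 hg)
  exact ⟨m, n, hn, Subtype.ext hmn⟩

/-- If `r, s` are nonzero coprime integers with `|r| ≠ |s|` and `φ` is a surjective
homomorphism from `G_{r,s}` onto a group `Q` such that the image of the element
`(1, e)` has infinite order, then `φ` is an isomorphism. -/
theorem grs_surjective_hom_is_iso (r s : ℤ) (hr : r ≠ 0) (hs : s ≠ 0)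
    (hco : IsCoprime r s) (hne : |r| ≠ |s|)
    (Q : Type) [Group Q] (φ : Grs r s →* Q) (hsurj : Function.Surjective φ)
    (hord : ¬ IsOfFinOrder (φ (grsOne r s))) :
    Function.Bijective φ :=
  ⟨grs_surjective_hom_is_iso_general hr hs hne _ φ hord, hsurj⟩
end

section
/- Let G be a group containing elements a, g with a of infinite order, and suppose there are nonzero integers m, n with g a^m g⁻¹ = a^n, n divides m, and |m/n| > 1. Then G contains a subgroup isomorphic to the Baumslag–Solitar group BS(1, l) where l = m/n; indeed, replacing a by a^n, the subgroup ⟨a^n, g⟩ is isomorphic to BS(1, l). -/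
/-- The Baumslag–Solitar group `BS(m, n) = ⟨a, t | t a^m t⁻¹ = a^n⟩`, presented on
generators indexed by `Bool`, with `t = of true` and `a = of false`. -/
abbrev BaumslagSolitar (m n : ℤ) : Type :=
  PresentedGroup
    ({FreeGroup.of true * (FreeGroup.of false) ^ m * (FreeGroup.of true)⁻¹ *
        ((FreeGroup.of false) ^ n)⁻¹} : Set (FreeGroup Bool))

/-!
Every element of `BS(1, l)` can be written `t⁻ⁱ aᵏ tʲ` with `i, j ≥ 0`. If a homomorphism sends
`t, a` to `s, b` and kills this element, then `bᵏ = s^(i - j)`, so `s^(i - j)` commutes with `b`.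
As conjugation by `sᵈ` with `d ≥ 0` raises `b` to the power `lᵈ`, this forces `i = j` when `b` has
infinite order and `|l| ≠ 1`, and then `bᵏ = 1` gives `k = 0`. So the homomorphism is injective.
It is applied to `a ↦ aⁿ, t ↦ g⁻¹`: the relation `g (aⁿ)ˡ g⁻¹ = aⁿ` is the one of `BS(1, l)`
for `g⁻¹`.
-/

section ConjugationToPower

variable {G : Type*} [Group G]

theorem not_isOfFinOrder_zpow {a : G} (ha : ¬ IsOfFinOrder a) {n : ℤ} (hn : n ≠ 0) :
    ¬ IsOfFinOrder (a ^ n) := by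
  simp only [isOfFinOrder_iff_zpow_eq_one, not_exists, not_and, ← zpow_mul] at ha ⊢
  exact fun k hk ↦ ha (n * k) (mul_ne_zero hn hk)

theorem closure_pair_inv_right (x y : G) :
    Subgroup.closure {x, y⁻¹} = Subgroup.closure {x, y} := by
  simp only [Set.insert_eq, Subgroup.closure_union, ← Subgroup.zpowers_eq_closure,
    Subgroup.zpowers_inv]

variable {b t : G} {l : ℤ}

theorem semiconjBy_pow_zpow_s10 (h : SemiconjBy t b (b ^ l)) (j : ℕ) (k : ℤ) :
    SemiconjBy (t ^ j) (b ^ k) (b ^ (l ^ j * k)) := by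
  induction j with
  | zero => simp
  | succ j ih =>
    have step : SemiconjBy t (b ^ (l ^ j * k)) (b ^ (l ^ (j + 1) * k)) := by
      simpa only [← zpow_mul, ← mul_assoc, ← pow_succ'] using h.zpow_right (l ^ j * k)
    exact pow_succ' t j ▸ step.mul_left ih

theorem exists_eq_inv_pow_mul_zpow_mul_pow (h : SemiconjBy t b (b ^ l)) {x : G}
    (hx : x ∈ Subgroup.closure {b, t}) :
    ∃ (i j : ℕ) (k : ℤ), x = (t ^ i)⁻¹ * b ^ k * t ^ j := by
  have mul_zpow (i j : ℕ) (k e : ℤ) :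
      (t ^ i)⁻¹ * b ^ k * t ^ j * b ^ e = (t ^ i)⁻¹ * b ^ (k + l ^ j * e) * t ^ j := by
    rw [mul_assoc _ (t ^ j), (semiconjBy_pow_zpow_s10 h j e).eq, zpow_add]
    simp only [mul_assoc]
  induction hx using Subgroup.closure_induction_right with
  | one => exact ⟨0, 0, 0, by simp⟩
  | mul_right x _ y hy ih =>
    obtain ⟨i, j, k, rfl⟩ := ih
    obtain rfl | rfl := hy
    · exact ⟨i, j, k + l ^ j * 1, by rw [← mul_zpow, zpow_one]⟩
    · exact ⟨i, j + 1, k, by rw [pow_succ, mul_assoc _ (y ^ j)]⟩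
  | mul_inv_cancel x _ y hy ih =>
    obtain ⟨i, j, k, rfl⟩ := ih
    obtain rfl | rfl := hy
    · exact ⟨i, j, k + l ^ j * (-1), by rw [← mul_zpow, zpow_neg_one]⟩
    · cases j with
      | succ j => exact ⟨i, j, k, by rw [pow_succ, ← mul_assoc, mul_inv_cancel_right]⟩
      | zero =>
        have pull : b ^ k * y⁻¹ = y⁻¹ * b ^ (l * k) := by
          simpa using (semiconjBy_pow_zpow_s10 h 1 k).inv_symm_left.eq.symm
        refine ⟨i + 1, 0, l * k, ?_⟩
        simp only [pow_zero, mul_one, pow_succ', mul_inv_rev, mul_assoc, pull]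

theorem eq_zero_of_commute_zpow (h : SemiconjBy t b (b ^ l)) (hb : ¬ IsOfFinOrder b)
    (hl : ¬ IsUnit l) {d : ℤ} (hd : Commute (t ^ d) b) : d = 0 := by
  have commute_pow : Commute (t ^ d.natAbs) b := by
    obtain hd_abs | hd_abs := d.natAbs_eq <;> rw [hd_abs] at hd <;>
      simpa only [zpow_neg, zpow_natCast, Commute.inv_left_iff] using hd
  have semiconjBy_pow : SemiconjBy (t ^ d.natAbs) b (b ^ l ^ d.natAbs) := by
    simpa only [zpow_one, mul_one] using semiconjBy_pow_zpow_s10 h d.natAbs 1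
  have zpow_eq : b ^ l ^ d.natAbs = b ^ (1 : ℤ) := by
    rw [zpow_one]
    exact mul_right_cancel (semiconjBy_pow.eq.symm.trans commute_pow.eq)
  have pow_eq_one : l ^ d.natAbs = 1 := injective_zpow_iff_not_isOfFinOrder.2 hb zpow_eq
  by_contra hd0
  exact hl (.of_pow_eq_one pow_eq_one (Int.natAbs_ne_zero.2 hd0))

end ConjugationToPower

namespace BaumslagSolitar

section Presentation

variable (m n : ℤ)

/-- The base generator `a` of `BS(m, n) = ⟨a, t | t a^m t⁻¹ = a^n⟩`. -/
def base : BaumslagSolitar m n := PresentedGroup.of false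

/-- The stable letter `t` of `BS(m, n) = ⟨a, t | t a^m t⁻¹ = a^n⟩`. -/
def stableLetter : BaumslagSolitar m n := PresentedGroup.of true

theorem semiconjBy_stableLetter :
    SemiconjBy (stableLetter m n) (base m n ^ m) (base m n ^ n) :=
  mul_inv_eq_iff_eq_mul.1 <| mul_inv_eq_one.1 <|
    PresentedGroup.one_of_mem (Set.mem_singleton _)

theorem closure_base_stableLetter :
    Subgroup.closure {base m n, stableLetter m n} = ⊤ := by
  rw [← PresentedGroup.closure_range_of, Bool.range_eq]
  rfl

end Presentation

variable {G : Type*} [Group G] {x y : G} {m n l : ℤ}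

/-- The homomorphism `BS(m, n) →* G` sending the base generator to `x` and the stable letter
to `y`, given the relation `y x^m = x^n y`. -/
def lift (h : SemiconjBy y (x ^ m) (x ^ n)) : BaumslagSolitar m n →* G :=
  PresentedGroup.toGroup (f := fun i ↦ if i then y else x) <| by
    rintro _ rfl
    simpa [mul_inv_eq_one, mul_inv_eq_iff_eq_mul] using h.eq

@[simp]
theorem lift_base (h : SemiconjBy y (x ^ m) (x ^ n)) : lift h (base m n) = x :=
  PresentedGroup.toGroup.of _

@[simp]
theorem lift_stableLetter (h : SemiconjBy y (x ^ m) (x ^ n)) : lift h (stableLetter m n) = y :=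
  PresentedGroup.toGroup.of _

theorem range_lift (h : SemiconjBy y (x ^ m) (x ^ n)) :
    (lift h).range = Subgroup.closure {x, y} := by
  rw [MonoidHom.range_eq_map, ← closure_base_stableLetter, MonoidHom.map_closure, Set.image_pair,
    lift_base, lift_stableLetter]

theorem injective_of_not_isOfFinOrder (hl : ¬ IsUnit l) {φ : BaumslagSolitar 1 l →* G}
    (hφ : ¬ IsOfFinOrder (φ (base 1 l))) : Function.Injective φ := by
  rw [injective_iff_map_eq_one]
  intro z hz
  have rel : SemiconjBy (stableLetter 1 l) (base 1 l) (base 1 l ^ l) := by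
    simpa only [zpow_one] using semiconjBy_stableLetter 1 l
  obtain ⟨i, j, k, rfl⟩ := exists_eq_inv_pow_mul_zpow_mul_pow rel
    (closure_base_stableLetter 1 l ▸ Subgroup.mem_top z)
  have zpow_sub_eq : φ (stableLetter 1 l) ^ (i - j : ℤ) = φ (base 1 l) ^ k := by
    simp only [map_mul, map_inv, map_pow, map_zpow, mul_assoc, inv_mul_eq_one] at hz
    rw [zpow_sub, zpow_natCast, zpow_natCast, hz, mul_inv_cancel_right]
  have rel_map : SemiconjBy (φ (stableLetter 1 l)) (φ (base 1 l)) (φ (base 1 l) ^ l) := by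
    simpa only [map_zpow] using rel.map φ
  have sub_eq_zero : (i - j : ℤ) = 0 :=
    eq_zero_of_commute_zpow rel_map hφ hl (zpow_sub_eq ▸ Commute.zpow_self _ _)
  obtain rfl : i = j := by lia
  obtain rfl : k = 0 := injective_zpow_iff_not_isOfFinOrder.2 hφ (by simp [← zpow_sub_eq])
  simp

/-- The isomorphism of the subgroup generated by `x` and `y` with `BS(1, l)`, inverse to `lift`. -/
noncomputable def closurePairEquiv (h : SemiconjBy y (x ^ (1 : ℤ)) (x ^ l))
    (hx : ¬ IsOfFinOrder x) (hl : ¬ IsUnit l) :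
    Subgroup.closure {x, y} ≃* BaumslagSolitar 1 l :=
  have lift_injective : Function.Injective (lift h) :=
    injective_of_not_isOfFinOrder hl (by rwa [lift_base])
  (MulEquiv.subgroupCongr (range_lift h).symm).trans (MonoidHom.ofInjective lift_injective).symm

end BaumslagSolitar

/-- If `g * a^m * g⁻¹ = a^n` in `G` with `a` of infinite order, `n ∣ m` and
`|m / n| > 1`, then the subgroup `⟨a^n, g⟩` is isomorphic to `BS(1, m/n)`;
in particular `G` contains a subgroup isomorphic to `BS(1, m/n)`. -/
theorem bs_subgroup_of_integer_modulus {G : Type*} [Group G] (a g : G)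
    (ha : ¬ IsOfFinOrder a) (m n : ℤ) (hm : m ≠ 0) (hn : n ≠ 0)
    (hrel : g * a ^ m * g⁻¹ = a ^ n) (hdvd : n ∣ m) (habs : 1 < |m / n|) :
    Nonempty ((Subgroup.closure {a ^ n, g} : Subgroup G) ≃* BaumslagSolitar 1 (m / n)) ∧
    ∃ H : Subgroup G, Nonempty (H ≃* BaumslagSolitar 1 (m / n)) := by
  have rel : SemiconjBy g⁻¹ ((a ^ n) ^ (1 : ℤ)) ((a ^ n) ^ (m / n)) := by
    rw [zpow_one, ← zpow_mul, Int.mul_ediv_cancel' hdvd]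
    exact SemiconjBy.inv_symm_left (mul_inv_eq_iff_eq_mul.1 hrel)
  have not_isUnit : ¬ IsUnit (m / n) := fun h ↦ habs.ne' (Int.isUnit_iff_abs_eq.1 h)
  have closure_equiv :=
    BaumslagSolitar.closurePairEquiv rel (not_isOfFinOrder_zpow ha hn) not_isUnit
  rw [closure_pair_inv_right] at closure_equiv
  exact ⟨⟨closure_equiv⟩, _, ⟨closure_equiv⟩⟩
end

section
/- Let G be a CT group which is not balanced. Then G contains a subgroup isomorphic to G_{r,s} for some nonzero coprime integers r, s with |r| ≠ |s|. Indeed, if g a^r g⁻¹ = a^s in G with a, g of infinite order and r, s nonzero coprime with |r| ≠ |s|, then ⟨a, g⟩ ≅ G_{r,s}. -/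
/-- A group is CT (commutative transitive) if commuting is transitive on nontrivial
elements. -/
def IsCT (G : Type*) [Group G] : Prop :=
  ∀ a b c : G, a ≠ 1 → b ≠ 1 → c ≠ 1 → Commute a b → Commute b c → Commute a c

/-!
Let `d` have infinite order with `g d^r g⁻¹ = d^s`. Commutative transitivity makes `d` commute with
`g d g⁻¹`, since both commute with `d^s`; as `r` and `s` are coprime, Bézout then produces an `r`-th
root of `d` satisfying the same relation, and an `s`-th root by the symmetry
`(g, r, s) ↦ (g⁻¹, s, r)`. Starting from `a`, conjugation by `g^{±1}` therefore never leaves the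
elements `d^m` with `d` such a root of `a`, so every element of `⟨a, g⟩` is a word `a^q g^k` with
`q` rational and `k` an integer, and `q` is multiplied by `(s/r)^{±1}` under conjugation by
`g^{±1}`. Since `|r| ≠ |s|`, no nontrivial power of `g` commutes with a root of `a`, so such a word
is trivial only if `q = 0` and `k = 0`. Hence in `G × (ℚ ⋊ ℤ)` the subgroup generated by the two
pairs of generators is the graph of an isomorphism `a^q g^k ↦ (q, k)`.
-/

section Group

variable {G : Type*} [Group G] {a d g x : G} {q : ℚ} {k r s : ℤ}

theorem zpow_eq_one_iff_of_not_isOfFinOrder (hx : ¬ IsOfFinOrder x) : x ^ k = 1 ↔ k = 0 :=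
  (injective_zpow_iff_not_isOfFinOrder.2 hx).eq_iff' (zpow_zero x)

theorem exists_zpow_eq_and_zpow_eq_of_commute {c : G} (hcd : Commute d c) (hrs : IsCoprime r s)
    (h : c ^ r = d ^ s) : ∃ e : G, e ^ r = d ∧ e ^ s = c := by
  obtain ⟨u, v, huv⟩ := hrs
  have hpow (i : ℤ) : (d ^ u * c ^ v) ^ i = d ^ (u * i) * c ^ (v * i) := by
    rw [(hcd.zpow_zpow u v).mul_zpow, zpow_mul, zpow_mul]
  refine ⟨d ^ u * c ^ v, ?_, ?_⟩
  · rw [hpow, mul_comm v, zpow_mul c, h, ← zpow_mul, ← zpow_add, mul_comm s, huv, zpow_one]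
  · rw [hpow, mul_comm u, zpow_mul d, ← h, ← zpow_mul, ← zpow_add, mul_comm r, huv, zpow_one]

theorem IsCT.exists_zpow_eq_and_semiconjBy (hct : IsCT G) (hd : ¬ IsOfFinOrder d) (hs : s ≠ 0)
    (hrs : IsCoprime r s) (h : SemiconjBy g (d ^ r) (d ^ s)) :
    ∃ e : G, e ^ r = d ∧ SemiconjBy g (e ^ r) (e ^ s) := by
  have hconj : SemiconjBy g d (g * d * g⁻¹) := SemiconjBy.conj_mk g d
  have hpow : (g * d * g⁻¹) ^ r = d ^ s :=
    mul_right_cancel ((hconj.zpow_right r).eq.symm.trans h.eq)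
  have hd1 : d ≠ 1 := fun h1 => hd (h1 ▸ IsOfFinOrder.one)
  have hcomm : Commute d (g * d * g⁻¹) :=
    hct d (d ^ s) _ hd1 ((zpow_eq_one_iff_of_not_isOfFinOrder hd).not.2 hs)
      (conj_eq_one_iff.not.2 hd1) (Commute.self_zpow d s) (hpow ▸ Commute.zpow_self _ r)
  obtain ⟨e, her, hes⟩ := exists_zpow_eq_and_zpow_eq_of_commute hcomm hrs hpow
  exact ⟨e, her, by rwa [her, hes]⟩

theorem semiconjBy_pow_zpow_pow_s12 (h : SemiconjBy g (d ^ r) (d ^ s)) (n : ℕ) :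
    SemiconjBy (g ^ n) (d ^ r ^ n) (d ^ s ^ n) := by
  induction n with
  | zero => simp
  | succ n ih =>
    have hleft : SemiconjBy (g ^ n) (d ^ r ^ (n + 1)) ((d ^ r) ^ s ^ n) := by
      simpa only [← zpow_mul, pow_succ, mul_comm r] using ih.zpow_right r
    have hright : SemiconjBy g ((d ^ r) ^ s ^ n) (d ^ s ^ (n + 1)) := by
      simpa only [← zpow_mul, pow_succ'] using h.zpow_right (s ^ n)
    rw [pow_succ' g]
    exact hright.mul_left hleft

theorem eq_zero_of_commute_zpow_s12 (hd : ¬ IsOfFinOrder d) (habs : |r| ≠ |s|)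
    (h : SemiconjBy g (d ^ r) (d ^ s)) (hcomm : Commute (g ^ k) d) : k = 0 := by
  by_contra hk
  have hcomm' : Commute (g ^ k.natAbs) d := by
    cases k <;> simpa using hcomm
  have hdpow : d ^ r ^ k.natAbs = d ^ s ^ k.natAbs :=
    mul_right_cancel ((hcomm'.zpow_right _).eq.symm.trans (semiconjBy_pow_zpow_pow_s12 h _).eq)
  have hpow : r ^ k.natAbs = s ^ k.natAbs := injective_zpow_iff_not_isOfFinOrder.2 hd hdpow
  have habspow : |r| ^ k.natAbs = |s| ^ k.natAbs := by rw [← abs_pow, ← abs_pow, hpow]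
  exact habs <|
    (pow_left_inj₀ (abs_nonneg r) (abs_nonneg s) (Int.natAbs_ne_zero.2 hk)).1 habspow

/-- `x` is a word `a ^ q * g ^ k` with rational exponent `q = m / n`, where `a ^ q` is read as
`d ^ m` for an `n`-th root `d` of `a`. Only roots inheriting the relation
`g * d ^ r * g⁻¹ = d ^ s` are admitted, so that conjugation by `g` acts on `q`. -/
def IsRationalWord (a g : G) (r s : ℤ) (q : ℚ) (k : ℤ) (x : G) : Prop :=
  ∃ (d : G) (m n : ℤ), n ≠ 0 ∧ d ^ n = a ∧ SemiconjBy g (d ^ r) (d ^ s) ∧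
    x = d ^ m * g ^ k ∧ q = m / n

namespace IsRationalWord

theorem one (h : SemiconjBy g (a ^ r) (a ^ s)) : IsRationalWord a g r s 0 0 1 :=
  ⟨a, 0, 1, one_ne_zero, zpow_one a, h, by simp, by simp⟩

theorem conjugator_inv (h : IsRationalWord a g r s q k x) : IsRationalWord a g⁻¹ s r q (-k) x := by
  obtain ⟨d, m, n, hn, hda, hd, hx, hq⟩ := h
  exact ⟨d, m, n, hn, hda, hd.inv_symm_left, by rwa [inv_zpow', neg_neg], hq⟩

theorem base_zpow_mul (h : IsRationalWord a g r s q k x) (j : ℤ) :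
    IsRationalWord a g r s (j + q) k (a ^ j * x) := by
  obtain ⟨d, m, n, hn, rfl, hd, rfl, rfl⟩ := h
  refine ⟨d, n * j + m, n, hn, rfl, hd, ?_, ?_⟩
  · rw [zpow_add, zpow_mul, mul_assoc]
  · have : (n : ℚ) ≠ 0 := Int.cast_ne_zero.2 hn
    push_cast
    field_simp

theorem conjugator_mul (h : IsRationalWord a g r s q k x) (hct : IsCT G) (ha : ¬ IsOfFinOrder a)
    (hr : r ≠ 0) (hs : s ≠ 0) (hrs : IsCoprime r s) :
    IsRationalWord a g r s (s / r * q) (k + 1) (g * x) := by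
  obtain ⟨d, m, n, hn, rfl, hd, rfl, rfl⟩ := h
  obtain ⟨e, rfl, he⟩ :=
    hct.exists_zpow_eq_and_semiconjBy (fun hfin => ha hfin.zpow) hs hrs hd
  refine ⟨e, s * m, r * n, mul_ne_zero hr hn, zpow_mul e r n, he, ?_, ?_⟩
  · calc g * ((e ^ r) ^ m * g ^ k) = (g * (e ^ r) ^ m) * g ^ k := (mul_assoc ..).symm
      _ = ((e ^ s) ^ m * g) * g ^ k := by rw [(he.zpow_right m).eq]
      _ = e ^ (s * m) * g ^ (k + 1) := by rw [mul_assoc, ← zpow_one_add, add_comm, zpow_mul]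
  · push_cast
    exact div_mul_div_comm ..

theorem conjugator_inv_mul (h : IsRationalWord a g r s q k x) (hct : IsCT G) (ha : ¬ IsOfFinOrder a)
    (hr : r ≠ 0) (hs : s ≠ 0) (hrs : IsCoprime r s) :
    IsRationalWord a g r s (r / s * q) (k - 1) (g⁻¹ * x) := by
  simpa [sub_eq_add_neg, add_comm] using
    (h.conjugator_inv.conjugator_mul hct ha hs hr hrs.symm).conjugator_inv

theorem eq_one_iff (h : IsRationalWord a g r s q k x) (ha : ¬ IsOfFinOrder a) (habs : |r| ≠ |s|) :
    x = 1 ↔ q = 0 ∧ k = 0 := by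
  obtain ⟨d, m, n, hn, rfl, hd, rfl, rfl⟩ := h
  have hd_inf : ¬ IsOfFinOrder d := fun hfin => ha hfin.zpow
  rw [div_eq_zero_iff, Int.cast_eq_zero, Int.cast_eq_zero, or_iff_left hn]
  constructor
  · intro hx
    have hg : g ^ k = (d ^ m)⁻¹ := eq_inv_of_mul_eq_one_right hx
    have hk : k = 0 :=
      eq_zero_of_commute_zpow_s12 hd_inf habs hd (hg ▸ (Commute.zpow_self d m).inv_left)
    refine ⟨(zpow_eq_one_iff_of_not_isOfFinOrder hd_inf).1 ?_, hk⟩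
    simpa [hk] using hx
  · rintro ⟨rfl, rfl⟩
    simp

end IsRationalWord

theorem exists_semiconjBy_zpow_of_not_isBalanced (hG : ¬ IsBalanced G) :
    ∃ (a g : G) (r s : ℤ), ¬ IsOfFinOrder a ∧ r ≠ 0 ∧ s ≠ 0 ∧ IsCoprime r s ∧ |r| ≠ |s| ∧
      SemiconjBy g (a ^ r) (a ^ s) := by
  unfold IsBalanced at hG
  push Not at hG
  obtain ⟨x, hx, m, n, ⟨g, hg⟩, hmn⟩ := hG
  have hzero : m = 0 ↔ n = 0 := by
    rw [← zpow_eq_one_iff_of_not_isOfFinOrder hx, ← zpow_eq_one_iff_of_not_isOfFinOrder hx, ← hg,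
      conj_eq_one_iff]
  have hm : m ≠ 0 := fun hm => hmn (by rw [hm, hzero.1 hm])
  have hn : n ≠ 0 := hzero.not.1 hm
  obtain ⟨D, r, s, hD, hrs, rfl, rfl⟩ := Int.exists_gcd_one' (Int.gcd_pos_of_ne_zero_left n hm)
  refine ⟨x ^ D, g, r, s, fun hfin => hx (hfin.of_pow hD.ne'), left_ne_zero_of_mul hm,
    left_ne_zero_of_mul hn, Int.isCoprime_iff_gcd_eq_one.2 hrs,
    fun habs => hmn (by rw [abs_mul, abs_mul, habs]), ?_⟩
  rw [mul_comm r, mul_comm s, zpow_mul, zpow_mul, zpow_natCast] at hg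
  exact mul_inv_eq_iff_eq_mul.1 hg

theorem nonempty_map_fst_mulEquiv_map_snd {H : Type*} [Group H] (I : Subgroup (G × H))
    (hI : ∀ z ∈ I, z.1 = 1 ↔ z.2 = 1) :
    Nonempty (I.map (MonoidHom.fst G H) ≃* I.map (MonoidHom.snd G H)) := by
  have hfst : Function.Injective ((MonoidHom.fst G H).subgroupMap I) := by
    refine (injective_iff_map_eq_one _).2 fun z hz => Subtype.ext ?_
    have hz1 : z.1.1 = 1 := congrArg Subtype.val hz
    exact Prod.ext hz1 ((hI z z.2).1 hz1)
  have hsnd : Function.Injective ((MonoidHom.snd G H).subgroupMap I) := by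
    refine (injective_iff_map_eq_one _).2 fun z hz => Subtype.ext ?_
    have hz2 : z.1.2 = 1 := congrArg Subtype.val hz
    exact Prod.ext ((hI z z.2).2 hz2) hz2
  exact ⟨(MulEquiv.ofBijective _ ⟨hfst, MonoidHom.subgroupMap_surjective _ I⟩).symm.trans
    (MulEquiv.ofBijective _ ⟨hsnd, MonoidHom.subgroupMap_surjective _ I⟩)⟩

end Group

section Grs

variable {r s : ℤ}

theorem toAdd_grsAut_apply (hr : r ≠ 0) (hs : s ≠ 0) (q : Multiplicative ℚ) :
    (grsAut r s q).toAdd = s / r * q.toAdd := by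
  have hunit : (grsUnit r s : ℚ) = s / r := by simp [grsUnit, hr, hs]
  rw [← hunit]
  rfl

theorem toAdd_left_grsT_mul (hr : r ≠ 0) (hs : s ≠ 0) (y : GrsAmbient r s) :
    (grsT r s * y).left.toAdd = s / r * y.left.toAdd := by
  rw [← toAdd_grsAut_apply hr hs, SemidirectProduct.mul_left]
  simp [grsT, grsAction]

theorem toAdd_left_grsT_inv_mul (hr : r ≠ 0) (hs : s ≠ 0) (y : GrsAmbient r s) :
    ((grsT r s)⁻¹ * y).left.toAdd = r / s * y.left.toAdd := by
  have hr' : (r : ℚ) ≠ 0 := Int.cast_ne_zero.2 hr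
  have hs' : (s : ℚ) ≠ 0 := Int.cast_ne_zero.2 hs
  have h := toAdd_left_grsT_mul hr hs ((grsT r s)⁻¹ * y)
  rw [mul_inv_cancel_left] at h
  rw [h]
  field_simp

theorem grsAmbient_eq_one_iff (y : GrsAmbient r s) :
    y = 1 ↔ y.left.toAdd = 0 ∧ y.right.toAdd = 0 := by
  simp [SemidirectProduct.ext_iff]

variable {G : Type*} [Group G] {a g : G}

theorem isRationalWord_of_mem_closure (hct : IsCT G) (ha : ¬ IsOfFinOrder a) (hr : r ≠ 0)
    (hs : s ≠ 0) (hrs : IsCoprime r s) (h : SemiconjBy g (a ^ r) (a ^ s))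
    {z : G × GrsAmbient r s} (hz : z ∈ Subgroup.closure {(a, grsA r s), (g, grsT r s)}) :
    IsRationalWord a g r s z.2.left.toAdd z.2.right.toAdd z.1 := by
  induction hz using Subgroup.closure_induction_left with
  | one => exact .one h
  | mul_left x hx y _ ih =>
    rcases hx with rfl | rfl
    · simpa [grsA] using ih.base_zpow_mul 1
    · rw [Prod.snd_mul, toAdd_left_grsT_mul hr hs]
      simpa [grsT, add_comm] using ih.conjugator_mul hct ha hr hs hrs
  | inv_mul_cancel x hx y _ ih =>
    rcases hx with rfl | rfl
    · simpa [grsA] using ih.base_zpow_mul (-1)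
    · rw [Prod.snd_mul, Prod.snd_inv, toAdd_left_grsT_inv_mul hr hs]
      simpa [grsT, sub_eq_neg_add] using ih.conjugator_inv_mul hct ha hr hs hrs

theorem IsCT.nonempty_closure_pair_mulEquiv_grs (hct : IsCT G) (ha : ¬ IsOfFinOrder a)
    (hr : r ≠ 0) (hs : s ≠ 0) (hrs : IsCoprime r s) (habs : |r| ≠ |s|)
    (h : SemiconjBy g (a ^ r) (a ^ s)) :
    Nonempty (Subgroup.closure {a, g} ≃* Grs r s) := by
  have hgraph := nonempty_map_fst_mulEquiv_map_snd
    (Subgroup.closure {(a, grsA r s), (g, grsT r s)}) fun z hz =>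
      ((isRationalWord_of_mem_closure hct ha hr hs hrs h hz).eq_one_iff ha habs).trans
        (grsAmbient_eq_one_iff z.2).symm
  rw [MonoidHom.map_closure, MonoidHom.map_closure, Set.image_pair, Set.image_pair] at hgraph
  exact hgraph

end Grs

/-- A CT group which is not balanced contains a subgroup isomorphic to `G_{r,s}` for
some nonzero coprime `r, s` with `|r| ≠ |s|`; indeed if `g * a^r * g⁻¹ = a^s` with
`a, g` of infinite order and `r, s` nonzero coprime with `|r| ≠ |s|`, then
`⟨a, g⟩ ≅ G_{r,s}`. -/
theorem ct_unbalanced_contains_grs {G : Type*} [Group G] (hct : IsCT G) :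
    (¬ IsBalanced G → ∃ r s : ℤ, r ≠ 0 ∧ s ≠ 0 ∧ IsCoprime r s ∧ |r| ≠ |s| ∧
      ∃ H : Subgroup G, Nonempty (H ≃* Grs r s)) ∧
    (∀ (a g : G) (r s : ℤ), ¬ IsOfFinOrder a → ¬ IsOfFinOrder g → r ≠ 0 → s ≠ 0 →
      IsCoprime r s → |r| ≠ |s| → g * a ^ r * g⁻¹ = a ^ s →
      Nonempty ((Subgroup.closure {a, g} : Subgroup G) ≃* Grs r s)) := by
  refine ⟨fun hG => ?_, fun a g r s ha _ hr hs hrs habs h =>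
    hct.nonempty_closure_pair_mulEquiv_grs ha hr hs hrs habs (mul_inv_eq_iff_eq_mul.1 h)⟩
  obtain ⟨a, g, r, s, ha, hr, hs, hrs, habs, h⟩ := exists_semiconjBy_zpow_of_not_isBalanced hG
  exact ⟨r, s, hr, hs, hrs, habs, Subgroup.closure {a, g},
    hct.nonempty_closure_pair_mulEquiv_grs ha hr hs hrs habs h⟩
end

section
/- Let r, s be coprime integers with |r| ≥ 2 and |s| ≥ 2. Then the group G_{r,s} contains no subgroup isomorphic to any Baumslag–Solitar group BS(m, n) (for any nonzero integers m, n). -/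
/-!
The exponent of `t` embeds `⟨t⟩` into `ℤ` and kills `a`, so no nontrivial power of `t` is a power
of `a` in `BS(m, n)`. On the other hand, commuting elements of `ℚ ⋊ ℤ` are commensurable, because
the ratio `s / r` has infinite order and `ℚ` has rank one. Suppose `BS(m, n)` embeds in `ℚ ⋊ ℤ`.
If `m = n`, then `a ^ m` commutes with `t`, and the two facts collide. If `m ≠ n`, then `a` lands in
`ℚ`, on which `t` acts by some power `(s / r) ^ k` with `(s / r) ^ k * m = n` and `k ≠ 0`. As no
nontrivial power of `s / r` is an integer, neither `m` nor `n` is a unit, so by Britton's lemma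
`t * a * t⁻¹` and `a` do not commute; but both land in the commutative group `ℚ`.
-/

theorem not_commute_hnn_conj {G : Type*} [Group G] {A B : Subgroup G} {φ : A ≃* B} {g h : G}
    (hg : g ∉ A) (hh : h ∉ B) :
    ¬ Commute (HNNExtension.t * .of g * HNNExtension.t⁻¹) (.of h : HNNExtension G A B φ) := by
  intro hcomm
  -- Both sides are reduced words, but their heads `1` and `h` lie in different cosets of `B`.
  let w₁ : HNNExtension.NormalWord.ReducedWord G A B :=
    { head := 1
      toList := [(1, g), (-1, h)]
      chain := by simp [hg] }
  let w₂ : HNNExtension.NormalWord.ReducedWord G A B :=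
    { head := h
      toList := [(1, g), (-1, 1)]
      chain := by simp [hg] }
  have hprod : w₁.prod φ = w₂.prod φ := by
    simpa [w₁, w₂, HNNExtension.NormalWord.ReducedWord.prod, mul_assoc] using hcomm.eq
  have hhead : w₁.head⁻¹ * w₂.head ∈ HNNExtension.toSubgroup A B (-1) :=
    (HNNExtension.ReducedWord.map_fst_eq_and_of_prod_eq φ hprod).2 1 (by simp [w₁])
  exact hh (by simpa [w₁, w₂] using hhead)

section ZPowRange

variable {G : Type*} [CommGroup G] [IsMulTorsionFree G] {m n : ℤ}

theorem zpowGroupHom_injective (hm : m ≠ 0) :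
    Function.Injective (zpowGroupHom m : G →* G) :=
  zpow_left_injective hm

/-- The isomorphism `g ^ m ↦ g ^ n` between the subgroups of `m`-th and of `n`-th powers in a
torsion-free commutative group, along which `BS(m, n)` is an HNN extension of `ℤ`. -/
noncomputable def zpowRangeEquiv (G : Type*) [CommGroup G] [IsMulTorsionFree G]
    (hm : m ≠ 0) (hn : n ≠ 0) :
    (zpowGroupHom m : G →* G).range ≃* (zpowGroupHom n : G →* G).range :=
  (MonoidHom.ofInjective (zpowGroupHom_injective hm)).symm.trans
    (MonoidHom.ofInjective (zpowGroupHom_injective hn))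

theorem coe_zpowRangeEquiv_zpow (hm : m ≠ 0) (hn : n ≠ 0) (g : G) :
    (zpowRangeEquiv G hm hn ⟨g ^ m, g, rfl⟩ : G) = g ^ n := by
  have hg : (MonoidHom.ofInjective (zpowGroupHom_injective hm)).symm ⟨g ^ m, g, rfl⟩ = g :=
    (MulEquiv.symm_apply_eq _).2 rfl
  rw [zpowRangeEquiv, MulEquiv.trans_apply, hg, MonoidHom.ofInjective_apply,
    zpowGroupHom_apply]

theorem hnn_t_mul_of_zpow_mul_t_inv (hm : m ≠ 0) (hn : n ≠ 0) (g : G) :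
    HNNExtension.t * .of g ^ m * HNNExtension.t⁻¹ =
      (.of g ^ n : HNNExtension G _ _ (zpowRangeEquiv G hm hn)) := by
  rw [← map_zpow, ← map_zpow, ← coe_zpowRangeEquiv_zpow hm hn, HNNExtension.equiv_eq_conj]

end ZPowRange

theorem isUnit_of_ofAdd_one_mem_range_zpowGroupHom {m : ℤ}
    (h : Multiplicative.ofAdd 1 ∈ (zpowGroupHom m : Multiplicative ℤ →* Multiplicative ℤ).range) :
    IsUnit m := by
  obtain ⟨k, hk⟩ := h
  exact .of_mul_eq_one k.toAdd (congrArg Multiplicative.toAdd hk)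

namespace BaumslagSolitar

variable (m n : ℤ)

/-- The generator `a` of `BS(m, n) = ⟨a, t | t a^m t⁻¹ = a^n⟩`. -/
def a : BaumslagSolitar m n := PresentedGroup.of false

/-- The generator `t` of `BS(m, n) = ⟨a, t | t a^m t⁻¹ = a^n⟩`. -/
def t : BaumslagSolitar m n := PresentedGroup.of true

theorem t_mul_a_zpow_mul_t_inv : t m n * a m n ^ m * (t m n)⁻¹ = a m n ^ n :=
  mul_inv_eq_one.1 (PresentedGroup.one_of_mem (Set.mem_singleton _))

variable {m n}

theorem exists_hom {K : Type*} [Group K] {x y : K} (h : y * x ^ m * y⁻¹ = x ^ n) :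
    ∃ f : BaumslagSolitar m n →* K, f (a m n) = x ∧ f (t m n) = y := by
  refine ⟨PresentedGroup.toGroup (f := fun b => if b then y else x) ?_, ?_, ?_⟩
  · rintro _ rfl
    simp [h]
  · simp [a]
  · simp [t]

theorem eq_zero_of_a_zpow_eq_t_zpow {i j : ℤ} (h : a m n ^ i = t m n ^ j) : j = 0 := by
  obtain ⟨f, hfa, hft⟩ :=
    exists_hom (m := m) (n := n) (x := 1) (y := Multiplicative.ofAdd (1 : ℤ)) (by simp)
  have hf : f (a m n) ^ i = f (t m n) ^ j := by rw [← map_zpow, h, map_zpow]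
  simpa [hfa, hft] using congrArg Multiplicative.toAdd hf.symm

theorem exists_hom_hnn (hm : m ≠ 0) (hn : n ≠ 0) :
    ∃ f : BaumslagSolitar m n →*
        HNNExtension (Multiplicative ℤ) _ _ (zpowRangeEquiv (Multiplicative ℤ) hm hn),
      f (a m n) = .of (.ofAdd 1) ∧ f (t m n) = HNNExtension.t :=
  exists_hom (hnn_t_mul_of_zpow_mul_t_inv hm hn _)

theorem a_zpow_ne_one (hm : m ≠ 0) (hn : n ≠ 0) {k : ℤ} (hk : k ≠ 0) : a m n ^ k ≠ 1 := by
  obtain ⟨f, hfa, -⟩ := exists_hom_hnn hm hn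
  intro h
  have hof : HNNExtension.of (φ := zpowRangeEquiv (Multiplicative ℤ) hm hn) (.ofAdd 1 ^ k) =
      HNNExtension.of 1 := by
    rw [map_zpow, ← hfa, ← map_zpow, h, map_one, map_one]
  exact hk (by simpa using congrArg Multiplicative.toAdd (HNNExtension.of_injective _ hof))

theorem not_commute_t_mul_a_mul_t_inv (hm : m ≠ 0) (hn : n ≠ 0) (hm' : ¬ IsUnit m)
    (hn' : ¬ IsUnit n) : ¬ Commute (t m n * a m n * (t m n)⁻¹) (a m n) := by
  obtain ⟨f, hfa, hft⟩ := exists_hom_hnn hm hn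
  intro h
  have hf := h.map f
  rw [map_mul, map_mul, map_inv, hfa, hft] at hf
  exact not_commute_hnn_conj (fun h1 => hm' (isUnit_of_ofAdd_one_mem_range_zpowGroupHom h1))
    (fun h1 => hn' (isUnit_of_ofAdd_one_mem_range_zpowGroupHom h1)) hf

theorem map_t_mul_map_a_zpow_mul_map_t_inv {K : Type*} [Group K] (f : BaumslagSolitar m n →* K) :
    f (t m n) * f (a m n) ^ m * (f (t m n))⁻¹ = f (a m n) ^ n := by
  simpa only [map_mul, map_zpow, map_inv] using congrArg f (t_mul_a_zpow_mul_t_inv m n)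

end BaumslagSolitar

section Ratio

variable {r s : ℤ}

theorem not_dvd_of_isCoprime (h : IsCoprime r s) (hr : 2 ≤ |r|) : ¬ r ∣ s := by
  intro hrs
  have habs : |r| = 1 := Int.isUnit_iff_abs_eq.1 (h.isUnit_of_dvd hrs)
  omega

theorem dvd_of_div_pow_eq_intCast {K : Type*} [Field K] [CharZero K] {k : ℕ} {N : ℤ}
    (hr : r ≠ 0) (hk : k ≠ 0) (h : ((s : K) / r) ^ k = N) : r ∣ s := by
  rw [div_pow, div_eq_iff (pow_ne_zero k (Int.cast_ne_zero.2 hr))] at h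
  rw [← Int.pow_dvd_pow_iff hk]
  exact Dvd.intro_left N (by exact_mod_cast h.symm)

theorem eq_zero_of_grsUnit_zpow_eq_intCast (hrs : ¬ r ∣ s) (hsr : ¬ s ∣ r) {k N : ℤ}
    (h : (grsUnit r s : ℚ) ^ k = N) : k = 0 := by
  have hr : r ≠ 0 := fun hr => hsr (hr ▸ dvd_zero s)
  have hs : s ≠ 0 := fun hs => hrs (hs ▸ dvd_zero r)
  have hu : (grsUnit r s : ℚ) = s / r := by simp [grsUnit, hr, hs]
  rw [hu] at h
  by_contra hk
  obtain ⟨j, rfl | rfl⟩ := k.eq_nat_or_neg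
  · exact hrs (dvd_of_div_pow_eq_intCast hr (by simpa using hk) (by simpa using h))
  · rw [zpow_neg, zpow_natCast, ← inv_pow, inv_div] at h
    exact hsr (dvd_of_div_pow_eq_intCast hs (by simpa using hk) h)

theorem not_isUnit_of_grsUnit_zpow_mul_eq (hrs : ¬ r ∣ s) (hsr : ¬ s ∣ r) {k m n : ℤ}
    (hk : k ≠ 0) (h : (grsUnit r s : ℚ) ^ k * m = n) : ¬ IsUnit m := by
  intro hm
  have hmm : (m : ℚ) * m = 1 := by exact_mod_cast Int.isUnit_mul_self hm
  refine hk (eq_zero_of_grsUnit_zpow_eq_intCast hrs hsr (N := n * m) ?_)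
  rw [Int.cast_mul, ← h, mul_assoc, hmm, mul_one]

theorem not_isOfFinOrder_grsUnit (hrs : ¬ r ∣ s) (hsr : ¬ s ∣ r) :
    ¬ IsOfFinOrder (grsUnit r s) := by
  rw [isOfFinOrder_iff_zpow_eq_one]
  rintro ⟨k, hk, h⟩
  refine hk (eq_zero_of_grsUnit_zpow_eq_intCast hrs hsr (N := 1) ?_)
  rw [← Units.val_zpow_eq_zpow_val, h, Units.val_one, Int.cast_one]

end Ratio

theorem exists_intCast_mul_eq_intCast_mul (p : ℚ) {q : ℚ} (hq : q ≠ 0) :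
    ∃ i j : ℤ, j ≠ 0 ∧ i * q = j * p := by
  refine ⟨p.num * q.den, q.num * p.den, by simp [hq], ?_⟩
  push_cast
  rw [mul_assoc, mul_assoc, Rat.den_mul_eq_num, Rat.den_mul_eq_num, mul_comm]

section SemidirectProduct

theorem exists_eq_inl_of_right_eq_one {N G : Type*} [Group N] [Group G] {φ : G →* MulAut N}
    {x : N ⋊[φ] G} (hx : x.right = 1) : ∃ p, x = SemidirectProduct.inl p :=
  ⟨x.left, SemidirectProduct.ext rfl hx⟩

theorem commute_of_right_eq_one {N G : Type*} [CommGroup N] [Group G] {φ : G →* MulAut N}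
    {x y : N ⋊[φ] G} (hx : x.right = 1) (hy : y.right = 1) : Commute x y := by
  obtain ⟨p, rfl⟩ := exists_eq_inl_of_right_eq_one hx
  obtain ⟨q, rfl⟩ := exists_eq_inl_of_right_eq_one hy
  exact (Commute.all p q).map SemidirectProduct.inl

theorem right_eq_one_of_mul_zpow_mul_inv_eq {N G : Type*} [Group N] [CommGroup G]
    [IsMulTorsionFree G] {φ : G →* MulAut N} {x y : N ⋊[φ] G} {m n : ℤ} (hmn : m ≠ n)
    (h : y * x ^ m * y⁻¹ = x ^ n) : x.right = 1 := by
  have hright : x.right ^ m = x.right ^ n := by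
    simpa only [map_mul, map_zpow, map_inv, mul_inv_cancel_comm,
      SemidirectProduct.rightHom_eq_right] using congrArg SemidirectProduct.rightHom h
  rw [← mul_inv_eq_one, ← zpow_sub] at hright
  exact (IsMulTorsionFree.zpow_eq_one_iff_left (sub_ne_zero.2 hmn)).1 hright

end SemidirectProduct

theorem grsAction_apply (r s : ℤ) (k : Multiplicative ℤ) (q : Multiplicative ℚ) :
    (grsAction r s k q).toAdd = (grsUnit r s : ℚ) ^ k.toAdd * q.toAdd := by
  have haut : grsAut r s = ((MulAutMultiplicative ℚ).symm.toMonoidHom.comp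
      (DistribMulAction.toAddAut ℚˣ ℚ)) (grsUnit r s) := rfl
  rw [grsAction, zpowersHom_apply, haut, ← map_zpow, ← Units.val_zpow_eq_zpow_val]
  rfl

namespace GrsAmbient

open SemidirectProduct

variable {r s : ℤ} {x y : GrsAmbient r s}

theorem grsUnit_zpow_mul_eq {m n : ℤ} (hx : x ≠ 1) (hxr : x.right = 1)
    (h : y * x ^ m * y⁻¹ = x ^ n) : (grsUnit r s : ℚ) ^ y.right.toAdd * m = n := by
  obtain ⟨q, rfl⟩ := exists_eq_inl_of_right_eq_one hxr
  have hq : q.toAdd ≠ 0 := fun hq => hx (congrArg inl hq)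
  have hleft := congrArg (fun g => g.left.toAdd) (mul_inv_eq_iff_eq_mul.1 h)
  simp only [← map_zpow, mul_left, left_inl, right_inl, map_one, MulAut.one_apply, toAdd_mul,
    toAdd_zpow, grsAction_apply, zsmul_eq_mul] at hleft
  apply mul_right_cancel₀ hq
  linear_combination hleft

theorem right_eq_one_of_commute (hu : ¬ IsOfFinOrder (grsUnit r s)) (hx : x ≠ 1)
    (hxr : x.right = 1) (h : Commute x y) : y.right = 1 := by
  have hfix : (grsUnit r s : ℚ) ^ y.right.toAdd * (1 : ℤ) = (1 : ℤ) :=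
    grsUnit_zpow_mul_eq hx hxr (by rw [zpow_one, h.symm.eq, mul_inv_cancel_right])
  by_contra hy
  exact hu (isOfFinOrder_iff_zpow_eq_one.2 ⟨y.right.toAdd, hy, by ext; simpa using hfix⟩)

theorem exists_zpow_eq_zpow_of_right_eq_one (hx : x ≠ 1) (hxr : x.right = 1) (hyr : y.right = 1) :
    ∃ i j : ℤ, j ≠ 0 ∧ x ^ i = y ^ j := by
  obtain ⟨q, rfl⟩ := exists_eq_inl_of_right_eq_one hxr
  obtain ⟨p, rfl⟩ := exists_eq_inl_of_right_eq_one hyr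
  have hq : q.toAdd ≠ 0 := fun hq => hx (congrArg inl hq)
  obtain ⟨i, j, hj, hij⟩ := exists_intCast_mul_eq_intCast_mul p.toAdd hq
  refine ⟨i, j, hj, ?_⟩
  rw [← map_zpow, ← map_zpow, inl_inj, ← Multiplicative.toAdd.injective.eq_iff, toAdd_zpow,
    toAdd_zpow, zsmul_eq_mul, zsmul_eq_mul, hij]

theorem exists_zpow_eq_zpow_of_commute (hu : ¬ IsOfFinOrder (grsUnit r s)) (hx : x ≠ 1)
    (h : Commute x y) : ∃ i j : ℤ, j ≠ 0 ∧ x ^ i = y ^ j := by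
  by_cases hxr : x.right = 1
  · exact exists_zpow_eq_zpow_of_right_eq_one hx hxr (right_eq_one_of_commute hu hx hxr h)
  · refine ⟨y.right.toAdd, x.right.toAdd, hxr, ?_⟩
    by_contra hne
    have hright : (x ^ y.right.toAdd * (y ^ x.right.toAdd)⁻¹).right = 1 := by
      rw [← rightHom_eq_right, map_mul, map_inv, map_zpow, map_zpow, mul_inv_eq_one]
      exact Multiplicative.toAdd.injective (mul_comm _ _)
    have hcomm : Commute (x ^ y.right.toAdd * (y ^ x.right.toAdd)⁻¹) x :=
      ((Commute.refl x).zpow_left _).mul_left (h.symm.zpow_left _).inv_left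
    exact hxr (right_eq_one_of_commute hu (mul_inv_eq_one.not.2 hne) hright hcomm)

end GrsAmbient

section Embedding

open BaumslagSolitar GrsAmbient

variable {r s m n : ℤ}

theorem not_injective_hom_of_eq (hu : ¬ IsOfFinOrder (grsUnit r s)) (hm : m ≠ 0)
    (f : BaumslagSolitar m m →* GrsAmbient r s) : ¬ Function.Injective f := by
  intro hf
  have hcomm : Commute (f (a m m) ^ m) (f (t m m)) :=
    (mul_inv_eq_iff_eq_mul.1 (map_t_mul_map_a_zpow_mul_map_t_inv f)).symm
  have hne : f (a m m) ^ m ≠ 1 := by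
    rw [← map_zpow, map_ne_one_iff f hf]
    exact a_zpow_ne_one hm hm hm
  obtain ⟨i, j, hj, hij⟩ := exists_zpow_eq_zpow_of_commute hu hne hcomm
  rw [← zpow_mul, ← map_zpow, ← map_zpow] at hij
  exact hj (eq_zero_of_a_zpow_eq_t_zpow (hf hij))

theorem not_injective_hom_of_ne (hrs : ¬ r ∣ s) (hsr : ¬ s ∣ r) (hm : m ≠ 0) (hn : n ≠ 0)
    (hmn : m ≠ n) (f : BaumslagSolitar m n →* GrsAmbient r s) : ¬ Function.Injective f := by
  intro hf
  have hrel := map_t_mul_map_a_zpow_mul_map_t_inv f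
  have ha : f (a m n) ≠ 1 := by
    rw [map_ne_one_iff f hf, ← zpow_one (a m n)]
    exact a_zpow_ne_one hm hn one_ne_zero
  have har : (f (a m n)).right = 1 := right_eq_one_of_mul_zpow_mul_inv_eq hmn hrel
  have hratio := grsUnit_zpow_mul_eq ha har hrel
  have hk : (f (t m n)).right.toAdd ≠ 0 := by
    intro hk
    rw [hk, zpow_zero, one_mul] at hratio
    exact hmn (by exact_mod_cast hratio)
  have hratio' : (grsUnit r s : ℚ) ^ (-(f (t m n)).right.toAdd) * n = m := by
    rw [← hratio, zpow_neg, inv_mul_cancel_left₀ (zpow_ne_zero _ (Units.ne_zero _))]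
  refine not_commute_t_mul_a_mul_t_inv hm hn (not_isUnit_of_grsUnit_zpow_mul_eq hrs hsr hk hratio)
    (not_isUnit_of_grsUnit_zpow_mul_eq hrs hsr (neg_ne_zero.2 hk) hratio') (.of_map hf ?_)
  have hconj : (f (t m n * a m n * (t m n)⁻¹)).right = 1 := by
    simp [har]
  exact commute_of_right_eq_one hconj har

end Embedding

theorem grs_no_baumslag_solitar_subgroup_general {r s : ℤ} (hrs : ¬ r ∣ s) (hsr : ¬ s ∣ r)
    {m n : ℤ} (hm : m ≠ 0) (hn : n ≠ 0) (f : BaumslagSolitar m n →* GrsAmbient r s) :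
    ¬ Function.Injective f := by
  rcases eq_or_ne m n with rfl | hmn
  · exact not_injective_hom_of_eq (not_isOfFinOrder_grsUnit hrs hsr) hm f
  · exact not_injective_hom_of_ne hrs hsr hm hn hmn f

/-- For coprime `r, s` with `|r| ≥ 2` and `|s| ≥ 2`, the group `G_{r,s}` contains no
subgroup isomorphic to any Baumslag–Solitar group `BS(m, n)`. -/
theorem grs_no_baumslag_solitar_subgroup (r s : ℤ) (hco : IsCoprime r s)
    (hr : 2 ≤ |r|) (hs : 2 ≤ |s|) :
    ∀ m n : ℤ, m ≠ 0 → n ≠ 0 →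
      ∀ H : Subgroup (Grs r s), ¬ Nonempty (H ≃* BaumslagSolitar m n) := by
  rintro m n hm hn H ⟨e⟩
  exact grs_no_baumslag_solitar_subgroup_general (not_dvd_of_isCoprime hco hr)
    (not_dvd_of_isCoprime hco.symm hs) hm hn
    ((Grs r s).subtype.comp (H.subtype.comp e.symm.toMonoidHom))
    ((Grs r s).subtype_injective.comp (H.subtype_injective.comp e.symm.injective))
end

section
/- Let H be a nontrivial subgroup of a group G. Then: (i) if S ≤ H ≤ G with S nontrivial, then Mal_G(S) ≤ Mal_G(H) and Mal_H(S) ≤ Mal_G(S); (ii) Mal_G(H) is a malnormal subgroup of G; (iii) if M is any malnormal subgroup of G containing H, then M contains Mal_G(H). -/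
/-- A subgroup `M` of `G` is malnormal if `g M g⁻¹ ∩ M ≠ {1}` implies `g ∈ M`. -/
def IsMalnormal {G : Type*} [Group G] (M : Subgroup G) : Prop :=
  ∀ g : G, (∃ h : G, h ∈ M ∧ h ≠ 1 ∧ g * h * g⁻¹ ∈ M) → g ∈ M

/-- The full intersecting conjugate `F_G(H)`: the subgroup generated by the elements
`g` with `g H g⁻¹ ∩ H ≠ {1}`. -/
def fullIC {G : Type*} [Group G] (H : Subgroup G) : Subgroup G :=
  Subgroup.closure {g : G | ∃ h : G, h ∈ H ∧ h ≠ 1 ∧ g * h * g⁻¹ ∈ H}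

/-- The iterates `F^k_G(H)` of the full intersecting conjugate. -/
def fullICIter {G : Type*} [Group G] (H : Subgroup G) : ℕ → Subgroup G
  | 0 => H
  | k + 1 => fullIC (fullICIter H k)

/-- The malnormal closure `Mal_G(H) = ⋃ₖ F^k_G(H)` (an ascending union of subgroups). -/
def malClosure {G : Type*} [Group G] (H : Subgroup G) : Subgroup G :=
  ⨆ k : ℕ, fullICIter H k

/-!
The operator `fullIC` is monotone and inflationary, and a subgroup is malnormal exactly when
`fullIC` does not enlarge it. Hence no iterate `fullICIter H k` leaves a malnormal subgroup
containing `H`. The union of the iterates is itself malnormal, because the two elements witnessing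
a nontrivial intersection already lie in a common iterate. So `malClosure H` is the least malnormal
subgroup containing `H`, and part (i) follows from this universal property, as malnormality pulls
back along injective homomorphisms.
-/

section MalnormalClosure

variable {G G' : Type*} [Group G] [Group G'] {H M : Subgroup G}

theorem le_fullIC (H : Subgroup G) : H ≤ fullIC H := by
  intro h hh
  obtain rfl | h_ne := eq_or_ne h 1
  · exact one_mem _
  · exact Subgroup.subset_closure ⟨h, hh, h_ne, by simpa using hh⟩

theorem fullIC_mono : Monotone (fullIC : Subgroup G → Subgroup G) := fun _ _ hle =>
  Subgroup.closure_mono fun _ ⟨h, hh, h_ne, h_conj⟩ => ⟨h, hle hh, h_ne, hle h_conj⟩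

theorem isMalnormal_iff_fullIC_le : IsMalnormal M ↔ fullIC M ≤ M :=
  (Subgroup.closure_le M).symm

theorem IsMalnormal.comap {M : Subgroup G'} (hM : IsMalnormal M) {f : G →* G'}
    (hf : Function.Injective f) : IsMalnormal (M.comap f) := by
  rintro g ⟨h, hh, h_ne, h_conj⟩
  exact hM (f g) ⟨f h, hh, (map_ne_one_iff f hf).2 h_ne, by simpa using h_conj⟩

theorem monotone_fullICIter (H : Subgroup G) : Monotone (fullICIter H) :=
  monotone_nat_of_le_succ fun k => le_fullIC (fullICIter H k)

theorem IsMalnormal.fullICIter_le (hM : IsMalnormal M) (hHM : H ≤ M) (k : ℕ) :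
    fullICIter H k ≤ M := by
  induction k with
  | zero => exact hHM
  | succ k ih => exact (fullIC_mono ih).trans (isMalnormal_iff_fullIC_le.1 hM)

theorem mem_malClosure {g : G} : g ∈ malClosure H ↔ ∃ k, g ∈ fullICIter H k :=
  Subgroup.mem_iSup_of_directed (monotone_fullICIter H).directed_le

theorem le_malClosure (H : Subgroup G) : H ≤ malClosure H :=
  le_iSup (fullICIter H) 0

theorem isMalnormal_malClosure (H : Subgroup G) : IsMalnormal (malClosure H) := by
  rintro g ⟨h, hh, h_ne, h_conj⟩
  obtain ⟨i, hi⟩ := mem_malClosure.1 hh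
  obtain ⟨j, hj⟩ := mem_malClosure.1 h_conj
  have h_mem : h ∈ fullICIter H (max i j) := monotone_fullICIter H (le_max_left i j) hi
  have h_conj_mem : g * h * g⁻¹ ∈ fullICIter H (max i j) :=
    monotone_fullICIter H (le_max_right i j) hj
  exact mem_malClosure.2
    ⟨max i j + 1, Subgroup.subset_closure ⟨h, h_mem, h_ne, h_conj_mem⟩⟩

theorem IsMalnormal.malClosure_le (hM : IsMalnormal M) (hHM : H ≤ M) : malClosure H ≤ M :=
  iSup_le (hM.fullICIter_le hHM)

theorem malClosure_mono : Monotone (malClosure : Subgroup G → Subgroup G) := fun _ K hle =>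
  (isMalnormal_malClosure K).malClosure_le (hle.trans (le_malClosure K))

theorem map_malClosure_le {f : G →* G'} (hf : Function.Injective f) (H : Subgroup G) :
    (malClosure H).map f ≤ malClosure (H.map f) :=
  Subgroup.map_le_iff_le_comap.2 <|
    ((isMalnormal_malClosure (H.map f)).comap hf).malClosure_le
      (Subgroup.map_le_iff_le_comap.1 (le_malClosure (H.map f)))

end MalnormalClosure

/-- For a nontrivial subgroup `H` of `G`: (i) if `S ≤ H` is nontrivial then
`Mal_G(S) ≤ Mal_G(H)` and `Mal_H(S) ≤ Mal_G(S)`; (ii) `Mal_G(H)` is malnormal in `G`;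
(iii) any malnormal subgroup of `G` containing `H` contains `Mal_G(H)`. -/
theorem malClosure_properties {G : Type*} [Group G] (H : Subgroup G) (hH : H ≠ ⊥) :
    (∀ S : Subgroup G, S ≠ ⊥ → S ≤ H →
      malClosure S ≤ malClosure H ∧
      (malClosure (S.subgroupOf H)).map H.subtype ≤ malClosure S) ∧
    IsMalnormal (malClosure H) ∧
    (∀ M : Subgroup G, IsMalnormal M → H ≤ M → malClosure H ≤ M) := by
  refine ⟨fun S _ hSH => ⟨malClosure_mono hSH, ?_⟩, isMalnormal_malClosure H,
    fun M hM hHM => hM.malClosure_le hHM⟩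
  simpa only [Subgroup.map_subgroupOf_eq_of_le hSH] using
    map_malClosure_le H.subtype_injective (S.subgroupOf H)
end

section
/- Let G be the HNN extension of a group H with stable letter t and associated subgroups A, B of H, where t x t⁻¹ = φ(x) for an isomorphism φ : A ≃ B, and identify H with its image in G. Let g, g' ∈ H be conjugate in G. If no conjugate of g by an element of H lies in A ∪ B, then no conjugate of g' by an element of H lies in A ∪ B, and g is conjugate to g' by an element of H. -/
/-!
If `u g u⁻¹ = g'`, write `u⁻¹` as a reduced word `w = h₀ t^ε₁ h₁ ⋯ t^εₙ hₙ`, so that `g w = w g'`.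
When `n > 0`, absorbing `g` into `h₀` on the left and `g'` into `hₙ` on the right gives two reduced
words for the same element, so their heads `g h₀` and `h₀` lie in the same left coset of `A` or `B`,
that is, `h₀⁻¹ g h₀ ∈ A ∪ B`. Hence an element that is not conjugate into `A ∪ B` can only be
conjugated into `H` by elements of `H`.
-/

section ReducedWords

open HNNExtension HNNExtension.NormalWord

variable {H : Type*} [Group H] {A B : Subgroup H} {φ : A ≃* B}

theorem exists_reducedWord_prod_eq (v : HNNExtension H A B φ) :
    ∃ w : ReducedWord H A B, w.prod φ = v := by
  obtain ⟨d⟩ := TransversalPair.nonempty H A B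
  obtain ⟨w, hw⟩ := (NormalWord.equiv φ d).symm.surjective v
  exact ⟨w.toReducedWord, hw⟩

variable (φ) in
theorem exists_reducedWord_prod_eq_prod_mul_of {w : ReducedWord H A B} (hw : w.toList ≠ [])
    (x : H) :
    ∃ w' : ReducedWord H A B, w'.head = w.head ∧
      w'.toList.map Prod.fst = w.toList.map Prod.fst ∧ w'.prod φ = w.prod φ * of x := by
  obtain ⟨h₀, l, hl⟩ := w
  obtain ⟨l, ⟨ε, y⟩, rfl⟩ := (List.eq_nil_or_concat' l).resolve_left hw
  have hl' : (l ++ [(ε, y * x)]).IsChain (fun a b => a.2 ∈ toSubgroup A B a.1 → a.1 = b.1) := by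
    simpa [List.isChain_append] using hl
  exact ⟨⟨h₀, l ++ [(ε, y * x)], hl'⟩, rfl, by simp, by simp [ReducedWord.prod, mul_assoc]⟩

theorem inv_head_mul_head_mem_of_prod_mul_of_eq {w₁ w₂ : ReducedWord H A B} {x : H}
    (hprod : w₁.prod φ * of x = w₂.prod φ) {ε : ℤˣ} (hε : ε ∈ w₁.toList.head?.map Prod.fst) :
    w₁.head⁻¹ * w₂.head ∈ toSubgroup A B (-ε) := by
  have hw₁ : w₁.toList ≠ [] := by
    intro h
    simp [h] at hε
  obtain ⟨w, hhead, hfst, hw⟩ := exists_reducedWord_prod_eq_prod_mul_of φ hw₁ x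
  rw [← hhead]
  refine (ReducedWord.map_fst_eq_and_of_prod_eq φ (hw.trans hprod)).2 ε ?_
  rwa [← List.head?_map, hfst, List.head?_map]

theorem inv_head_mul_mul_head_mem_of_of_mul_prod_eq {w : ReducedWord H A B} {g g' : H}
    (hw : of g * w.prod φ = w.prod φ * of g') {ε : ℤˣ}
    (hε : ε ∈ w.toList.head?.map Prod.fst) :
    w.head⁻¹ * g * w.head ∈ toSubgroup A B (-ε) := by
  let gw : ReducedWord H A B := { w with head := g * w.head }
  have hgw : gw.prod φ = of g * w.prod φ := by simp [gw, ReducedWord.prod, mul_assoc]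
  rw [mul_assoc]
  exact inv_head_mul_head_mem_of_prod_mul_of_eq (w₂ := gw) (hw.symm.trans hgw.symm) hε

theorem mem_or_mem_of_mem_toSubgroup {h : H} {ε : ℤˣ} (hh : h ∈ toSubgroup A B ε) :
    h ∈ A ∨ h ∈ B := by
  rcases Int.units_eq_one_or ε with rfl | rfl
  · exact Or.inl hh
  · exact Or.inr hh

theorem exists_conj_mem_or_mem_of_notMem_range_of {u : HNNExtension H A B φ} {g g' : H}
    (hu : u ∉ (of : H →* HNNExtension H A B φ).range) (hconj : u * of g * u⁻¹ = of g') :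
    ∃ h : H, h * g * h⁻¹ ∈ A ∨ h * g * h⁻¹ ∈ B := by
  obtain ⟨w, hw⟩ := exists_reducedWord_prod_eq u⁻¹
  have hcomm : of g * w.prod φ = w.prod φ * of g' := by
    rw [hw, ← hconj]
    group
  cases hl : w.toList with
  | nil =>
    have hu_inv : of w.head = u⁻¹ := by simpa [ReducedWord.prod, hl] using hw
    exact absurd ⟨w.head⁻¹, by rw [map_inv, hu_inv, inv_inv]⟩ hu
  | cons a l =>
    have hmem : w.head⁻¹ * g * w.head ∈ toSubgroup A B (-a.1) :=
      inv_head_mul_mul_head_mem_of_of_mul_prod_eq hcomm (by simp [hl])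
    exact ⟨w.head⁻¹, by simpa using mem_or_mem_of_mem_toSubgroup hmem⟩

end ReducedWords

/-- Collins' criterion (simplified form): let `G` be the HNN extension of `H` with
associated subgroups `A, B ≤ H` and isomorphism `φ : A ≃* B`, and let `g, g' ∈ H` be
conjugate in `G`.  If no conjugate of `g` by an element of `H` lies in `A ∪ B`, then
the same holds for `g'`, and `g` is conjugate to `g'` by an element of `H`. -/
theorem hnn_conjugacy_in_base {H : Type*} [Group H] (A B : Subgroup H) (φ : A ≃* B)
    (g g' : H)
    (hconj : ∃ u : HNNExtension H A B φ,
      u * HNNExtension.of g * u⁻¹ = HNNExtension.of g')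
    (hg : ∀ h : H, h * g * h⁻¹ ∉ A ∧ h * g * h⁻¹ ∉ B) :
    (∀ h : H, h * g' * h⁻¹ ∉ A ∧ h * g' * h⁻¹ ∉ B) ∧ ∃ h : H, h * g * h⁻¹ = g' := by
  obtain ⟨u, hu⟩ := hconj
  have hu_range : u ∈ (HNNExtension.of : H →* HNNExtension H A B φ).range := by
    by_contra hu_range
    obtain ⟨h, hA | hB⟩ := exists_conj_mem_or_mem_of_notMem_range_of hu_range hu
    · exact (hg h).1 hA
    · exact (hg h).2 hB
  obtain ⟨k, rfl⟩ := hu_range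
  obtain rfl : k * g * k⁻¹ = g' := HNNExtension.of_injective φ (by simpa using hu)
  refine ⟨fun h => ?_, k, rfl⟩
  simpa [mul_assoc] using hg (h * k)
end
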